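/- arXiv:2207.06697 — 4 statements merged into one kernel-verified Lean document; each statement's English description precedes it below -/
import Mathlib

section
/- Let r ∈ ℝ, T > 0 and p > 4. Then there exists a constant C = C(r,p,T) > 0 such that for all 0 ≤ s ≤ t ≤ T, sup_{x≥0} ( ∫_s^t [ ∫_0^∞ G_r(t−u,x,z)² dz ]^{p/(p−2)} du )^{(p−2)/2} ≤ C |t−s|^{(p−4)/4}. -/
/-!
Dropping the reflected term bounds `G(τ,x,·)` by the Gaussian density of mean `x` and variance
`2τ`. Squaring this density halves the variance and produces a factor `(8πτ)^(-1/2)`; the weight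
`e^{-2r(x-z)}` then only shifts the mean and produces a factor `e^{2r²τ}`. So
`∫ G_r(τ,x,z)² dz ≤ e^{2r²τ} (8πτ)^(-1/2)` uniformly in `x ≥ 0`. With `q = p/(p-2)`, the condition
`p > 4` says exactly that `q/2 < 1`, which makes `(t-u)^(-q/2)` integrable up to `u = t`, with
integral `(t-s)^(1-q/2) / (1-q/2)`; and `(1-q/2)(p-2)/2 = (p-4)/4`.
-/

open MeasureTheory Real Set Filter

/-- Dirichlet heat kernel on `[0,∞)`. -/
noncomputable def G (t x y : ℝ) : ℝ :=
  (Real.sqrt (4 * Real.pi * t))⁻¹ *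
    (Real.exp (-(x - y) ^ 2 / (4 * t)) - Real.exp (-(x + y) ^ 2 / (4 * t)))

/-- Exponentially weighted kernel `G_r(t,x,y) = e^{-r(x-y)} G(t,x,y)`. -/
noncomputable def Gr (r t x y : ℝ) : ℝ := Real.exp (-r * (x - y)) * G t x y

/-- Weighted sup norm `‖v‖_{L_r} = sup_{x ≥ 0} e^{-rx}|v(x)|`. -/
noncomputable def LrNorm (r : ℝ) (v : ℝ → ℝ) : ℝ :=
  sSup ((fun x => Real.exp (-r * x) * |v x|) '' Ici 0)

/-- Weighted sup norm `‖u‖_{C_r^T} = sup_{t ∈ [0,T]} sup_{x ≥ 0} e^{-rx}|u(t,x)|`. -/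
noncomputable def CrNorm (r T : ℝ) (u : ℝ → ℝ → ℝ) : ℝ :=
  sSup ((fun q : ℝ × ℝ => Real.exp (-r * q.2) * |u q.1 q.2|) '' (Icc 0 T ×ˢ Ici 0))

/-- `‖u‖_{C_r^T} < ∞`, expressed as boundedness of the weighted values. -/
def CrBdd (r T : ℝ) (u : ℝ → ℝ → ℝ) : Prop :=
  BddAbove ((fun q : ℝ × ℝ => Real.exp (-r * q.2) * |u q.1 q.2|) '' (Icc 0 T ×ˢ Ici 0))

section HeatKernel

open ProbabilityTheory
open scoped NNReal

lemma gaussianPDFReal_sq (μ : ℝ) (v : ℝ≥0) (y : ℝ) :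
    gaussianPDFReal μ v y ^ 2 = (√(4 * π * v))⁻¹ * gaussianPDFReal μ (v / 2) y := by
  have hsqrt : (√(2 * π * v))⁻¹ ^ 2 = (√(4 * π * v))⁻¹ * (√(2 * π * (v / 2)))⁻¹ := by
    have hprod : 4 * π * v * (2 * π * (v / 2)) = (2 * π * v) ^ 2 := by ring
    rw [inv_pow, Real.sq_sqrt (by positivity), ← mul_inv, ← sqrt_mul (by positivity), hprod,
      sqrt_sq (by positivity)]
  have hexp : exp (-(y - μ) ^ 2 / (2 * v)) ^ 2 = exp (-(y - μ) ^ 2 / (2 * (v / 2))) := by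
    rw [← exp_nat_mul]
    congr 1
    push_cast
    ring
  rw [gaussianPDFReal, gaussianPDFReal, mul_pow, hsqrt, hexp, NNReal.coe_div, NNReal.coe_ofNat,
    mul_assoc]

lemma exp_mul_gaussianPDFReal (c μ : ℝ) (v : ℝ≥0) (y : ℝ) :
    exp (c * (y - μ)) * gaussianPDFReal μ v y =
      exp (c ^ 2 * v / 2) * gaussianPDFReal (μ + c * v) v y := by
  obtain rfl | hv := eq_or_ne v 0
  · simp
  have hv' : (v : ℝ) ≠ 0 := NNReal.coe_ne_zero.2 hv
  rw [gaussianPDFReal, gaussianPDFReal, mul_left_comm, mul_left_comm (exp (c ^ 2 * v / 2)),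
    ← exp_add, ← exp_add]
  congr 2
  field_simp
  ring

lemma G_nonneg {t x y : ℝ} (ht : 0 ≤ t) (hx : 0 ≤ x) (hy : 0 ≤ y) : 0 ≤ G t x y := by
  have hdist : (x - y) ^ 2 ≤ (x + y) ^ 2 := by nlinarith [mul_nonneg hx hy]
  have hexp : exp (-(x + y) ^ 2 / (4 * t)) ≤ exp (-(x - y) ^ 2 / (4 * t)) := by gcongr
  exact mul_nonneg (by positivity) (sub_nonneg.2 hexp)

lemma G_le_gaussianPDFReal (t : ℝ≥0) (x y : ℝ) : G t x y ≤ gaussianPDFReal x (2 * t) y :=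
  calc G t x y ≤ (√(4 * π * t))⁻¹ * exp (-(x - y) ^ 2 / (4 * t)) :=
        mul_le_mul_of_nonneg_left (sub_le_self _ (exp_pos _).le) (by positivity)
    _ = gaussianPDFReal x (2 * t) y := by
        rw [gaussianPDFReal]
        push_cast
        ring_nf

lemma Gr_sq_le_gaussianPDFReal (r : ℝ) (t : ℝ≥0) {x y : ℝ} (hx : 0 ≤ x) (hy : 0 ≤ y) :
    Gr r t x y ^ 2 ≤
      exp (2 * r ^ 2 * t) / √(8 * π * t) * gaussianPDFReal (x + 2 * r * t) t y :=
  calc Gr r t x y ^ 2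
      = exp (2 * r * (y - x)) * G t x y ^ 2 := by
        rw [Gr, mul_pow, ← exp_nat_mul]
        congr 2
        push_cast
        ring
    _ ≤ exp (2 * r * (y - x)) * gaussianPDFReal x (2 * t) y ^ 2 := by
        gcongr
        exacts [G_nonneg t.2 hx hy, G_le_gaussianPDFReal t x y]
    _ = (√(8 * π * t))⁻¹ * (exp (2 * r * (y - x)) * gaussianPDFReal x t y) := by
        rw [gaussianPDFReal_sq, mul_div_cancel_left₀ t two_ne_zero, mul_left_comm]
        push_cast
        ring_nf
    _ = exp (2 * r ^ 2 * t) / √(8 * π * t) * gaussianPDFReal (x + 2 * r * t) t y := by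
        rw [exp_mul_gaussianPDFReal]
        ring_nf

lemma integral_Gr_sq_le (r : ℝ) {t x : ℝ} (ht : 0 < t) (hx : 0 ≤ x) :
    ∫ z in Ioi 0, Gr r t x z ^ 2 ≤ exp (2 * r ^ 2 * t) / √(8 * π * t) := by
  lift t to ℝ≥0 using ht.le
  set g := gaussianPDFReal (x + 2 * r * t) t
  have hg : Integrable g := integrable_gaussianPDFReal _ _
  calc ∫ z in Ioi 0, Gr r t x z ^ 2
      ≤ ∫ z in Ioi 0, exp (2 * r ^ 2 * t) / √(8 * π * t) * g z :=
        integral_mono_of_nonneg (ae_of_all _ fun z => sq_nonneg _)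
          (hg.const_mul _).integrableOn <|
          (ae_restrict_mem measurableSet_Ioi).mono fun z hz =>
            Gr_sq_le_gaussianPDFReal r t hx (mem_Ioi.1 hz).le
    _ ≤ exp (2 * r ^ 2 * t) / √(8 * π * t) * ∫ z, g z := by
        rw [integral_const_mul]
        exact mul_le_mul_of_nonneg_left
          (setIntegral_le_integral hg (ae_of_all _ (gaussianPDFReal_nonneg _ _))) (by positivity)
    _ = exp (2 * r ^ 2 * t) / √(8 * π * t) := by
        rw [integral_gaussianPDFReal_eq_one _ (NNReal.coe_pos.1 ht).ne', mul_one]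

end HeatKernel

section TimeIntegral

variable {a s t : ℝ}

lemma integrableOn_Ioo_sub_rpow (ha : -1 < a) (hst : s ≤ t) :
    IntegrableOn (fun u => (t - u) ^ a) (Ioo s t) := by
  rw [← intervalIntegrable_iff_integrableOn_Ioo_of_le hst]
  simpa only [sub_sub_cancel, sub_zero] using
    (intervalIntegral.intervalIntegrable_rpow' (a := t - s) (b := 0) ha).comp_sub_left t

lemma integral_Ioo_sub_rpow (ha : -1 < a) (hst : s ≤ t) :
    ∫ u in Ioo s t, (t - u) ^ a = (t - s) ^ (a + 1) / (a + 1) := by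
  rw [← integral_Ioc_eq_integral_Ioo, ← intervalIntegral.integral_of_le hst,
    intervalIntegral.integral_comp_sub_left (fun u => u ^ a), integral_rpow (Or.inl ha), sub_self,
    zero_rpow (by linarith), sub_zero]

lemma setIntegral_rpow_le_of_le_mul_sub_rpow {f : ℝ → ℝ} {K q : ℝ} (hK : 0 ≤ K) (hq : 0 ≤ q)
    (haq : -1 < a * q) (hst : s ≤ t) (hf₀ : ∀ u ∈ Ioo s t, 0 ≤ f u)
    (hf : ∀ u ∈ Ioo s t, f u ≤ K * (t - u) ^ a) :
    ∫ u in Ioo s t, f u ^ q ≤ K ^ q * ((t - s) ^ (a * q + 1) / (a * q + 1)) := by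
  have hfq : ∀ u ∈ Ioo s t, f u ^ q ≤ K ^ q * (t - u) ^ (a * q) := fun u hu => by
    have htu : 0 ≤ t - u := sub_nonneg.2 hu.2.le
    rw [rpow_mul htu, ← mul_rpow hK (by positivity)]
    exact rpow_le_rpow (hf₀ u hu) (hf u hu) hq
  have hmem := ae_restrict_mem (μ := volume) (measurableSet_Ioo (a := s) (b := t))
  rw [← integral_Ioo_sub_rpow haq hst, ← integral_const_mul]
  exact integral_mono_of_nonneg (hmem.mono fun u hu => rpow_nonneg (hf₀ u hu) q)
    ((integrableOn_Ioo_sub_rpow haq hst).const_mul _) (hmem.mono hfq)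

end TimeIntegral

lemma integral_rpow_integral_Gr_sq_le (r : ℝ) {T q s t x : ℝ} (hq₀ : 0 ≤ q) (hq₂ : q < 2)
    (hst : s ≤ t) (htsT : t - s ≤ T) (hx : 0 ≤ x) :
    ∫ u in Ioc s t, (∫ z in Ioi 0, Gr r (t - u) x z ^ 2) ^ q ≤
      (exp (2 * r ^ 2 * T) / √(8 * π)) ^ q * ((t - s) ^ (1 - q / 2) / (1 - q / 2)) := by
  have hexponent : 1 - q / 2 = -(1 / 2) * q + 1 := by ring
  rw [integral_Ioc_eq_integral_Ioo, hexponent]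
  refine setIntegral_rpow_le_of_le_mul_sub_rpow (by positivity) hq₀ (by linarith) hst
    (fun _ _ => integral_nonneg fun _ => sq_nonneg _) fun u hu => ?_
  have hτ : 0 < t - u := sub_pos.2 hu.2
  have hτT : t - u ≤ T := by linarith [hu.1]
  calc ∫ z in Ioi 0, Gr r (t - u) x z ^ 2
      ≤ exp (2 * r ^ 2 * (t - u)) / √(8 * π * (t - u)) := integral_Gr_sq_le r hτ hx
    _ ≤ exp (2 * r ^ 2 * T) / √(8 * π * (t - u)) := by gcongr
    _ = exp (2 * r ^ 2 * T) / √(8 * π) * (t - u) ^ (-(1 / 2) : ℝ) := by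
        rw [sqrt_mul (by positivity), rpow_neg hτ.le, ← sqrt_eq_rpow, ← div_eq_mul_inv, div_div]

/-- Lemma A.1 (i) of Hambly–Kalsi: time-integrated square bound for `G_r`. -/
theorem stmt_0 (r T p : ℝ) (hT : 0 < T) (hp : 4 < p) :
    ∃ C > (0:ℝ), ∀ s t : ℝ, 0 ≤ s → s ≤ t → t ≤ T → ∀ x ≥ (0:ℝ),
      (∫ u in Ioc s t, (∫ z in Ioi (0:ℝ), (Gr r (t - u) x z) ^ 2) ^ (p / (p - 2)))
          ^ ((p - 2) / 2)
        ≤ C * |t - s| ^ ((p - 4) / 4) := by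
  have hp₂ : 0 < p - 2 := by linarith
  set q := p / (p - 2) with hq
  have hq₀ : 0 ≤ q := by positivity
  have hq₂ : q < 2 := by rw [hq, div_lt_iff₀ hp₂]; linarith
  have hden : 0 < 1 - q / 2 := by linarith
  have hexponent : (1 - q / 2) * ((p - 2) / 2) = (p - 4) / 4 := by rw [hq]; field_simp; ring
  set K := exp (2 * r ^ 2 * T) / √(8 * π)
  refine ⟨(K ^ q / (1 - q / 2)) ^ ((p - 2) / 2), by positivity, fun s t hs hst htT x hx => ?_⟩
  have hts : 0 ≤ t - s := sub_nonneg.2 hst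
  calc (∫ u in Ioc s t, (∫ z in Ioi (0:ℝ), (Gr r (t - u) x z) ^ 2) ^ q) ^ ((p - 2) / 2)
      ≤ (K ^ q * ((t - s) ^ (1 - q / 2) / (1 - q / 2))) ^ ((p - 2) / 2) := by
        gcongr
        exact integral_rpow_integral_Gr_sq_le r hq₀ hq₂ hst (by linarith) hx
    _ = (K ^ q / (1 - q / 2)) ^ ((p - 2) / 2) * |t - s| ^ ((p - 4) / 4) := by
        rw [← mul_div_assoc, mul_div_right_comm, mul_rpow (by positivity) (by positivity),
          ← rpow_mul hts, hexponent, abs_of_nonneg hts]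
end

section
/- Let r ∈ ℝ, T > 0 and p > 4. Then there exists a constant C = C(r,p,T) > 0 such that for all x, y ≥ 0, sup_{s∈[0,T]} ( ∫_0^s [ ∫_0^∞ |G_r(s−u,x,z) − G_r(s−u,y,z)|² dz ]^{p/(p−2)} du )^{(p−2)/2} ≤ C |x−y|^{(p−4)/2}. -/
open MeasureTheory Real Set Filter

/-!
Put `t = s - u`, `h = |x - y|`, `q = p / (p - 2)`, and let `F(t)` be the spatial integral. The
kernel and its `x`-derivative have Gaussian bounds of size `t^{-1/2}` and `t^{-1}`: for `x, z ≥ 0`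
the direct Gaussian dominates the reflected one, and completing the square absorbs the weight
`e^{-r(x-z)}`. For `h > √t` the triangle inequality, and for `h ≤ √t` the mean value theorem, bound
the increment by `t^{-1/2} min(1, h/√t)` times Gaussians; in the second case moving the Gaussian
from the intermediate point to `x` costs only a constant, because the displacement is at most `√t`.
Squaring and integrating gives `F(t) ≤ K min(t^{-1/2}, h² t^{-3/2})`.

The two branches meet at `t = h²`, and as `q/2 < 1 < 3q/2` the `q`-th power is integrable over
`(0,∞)`, with integral a multiple of `h^{2-q}`. Finally `(2 - q)(p - 2)/2 = (p - 4)/2`.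
-/

section Gaussian

variable {a b x y : ℝ}

lemma exp_neg_sq_div_le_of_le (ha : 0 < a) (hab : a ≤ b) (w : ℝ) :
    exp (-w ^ 2 / a) ≤ exp (-w ^ 2 / b) := by
  simp only [neg_div]
  gcongr

lemma exp_neg_add_sq_div_le_exp_neg_sub_sq_div (ha : 0 ≤ a) (hxy : 0 ≤ x * y) :
    exp (-(x + y) ^ 2 / a) ≤ exp (-(x - y) ^ 2 / a) := by
  gcongr exp (?_ / a)
  linarith

lemma exp_mul_mul_exp_neg_sq_div_le (ha : 0 < a) (b w : ℝ) :
    exp (b * w) * exp (-w ^ 2 / a) ≤ exp (a * b ^ 2 / 2) * exp (-w ^ 2 / (2 * a)) := by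
  rw [← exp_add, ← exp_add, exp_le_exp, ← sub_nonneg]
  have complete_square : a * b ^ 2 / 2 + -w ^ 2 / (2 * a) - (b * w + -w ^ 2 / a) =
      (w - a * b) ^ 2 / (2 * a) := by field_simp; ring
  rw [complete_square]
  positivity

lemma abs_mul_exp_neg_sq_div_le (ha : 0 < a) (w : ℝ) :
    |w| * exp (-w ^ 2 / a) ≤ √a * exp (-w ^ 2 / (2 * a)) := by
  have abs_le : |w| ≤ √a * exp (w ^ 2 / (2 * a)) := by
    have hw : w ^ 2 / (2 * a) = (|w| / √a) ^ 2 / 2 := by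
      rw [div_pow, sq_abs, sq_sqrt ha.le]; field_simp
    rw [← div_le_iff₀' (sqrt_pos.2 ha), hw]
    nlinarith [add_one_le_exp ((|w| / √a) ^ 2 / 2), sq_nonneg (|w| / √a - 1)]
  calc |w| * exp (-w ^ 2 / a)
      ≤ √a * exp (w ^ 2 / (2 * a)) * exp (-w ^ 2 / a) := by gcongr
    _ = √a * exp (-w ^ 2 / (2 * a)) := by
        rw [mul_assoc, ← exp_add]; congr 2; field_simp; ring

lemma exp_neg_sub_sq_div_le_recenter (ha : 0 ≤ a) (x y z : ℝ) :
    exp (-(y - z) ^ 2 / a) ≤ exp ((x - y) ^ 2 / a) * exp (-(x - z) ^ 2 / (2 * a)) := by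
  have parallelogram : (x - z) ^ 2 ≤ 2 * ((x - y) ^ 2 + (y - z) ^ 2) := by
    simpa only [sub_add_sub_cancel] using add_sq_le (a := x - y) (b := y - z)
  rw [← exp_add, exp_le_exp, ← div_div, ← add_div]
  gcongr
  linarith

lemma integrable_exp_neg_sub_sq_div (ha : 0 < a) (x : ℝ) :
    Integrable fun z => exp (-(x - z) ^ 2 / a) := by
  simpa only [neg_mul, inv_mul_eq_div, neg_div] using
    (integrable_exp_neg_mul_sq (inv_pos.2 ha)).comp_sub_left x

lemma integral_exp_neg_sub_sq_div (a x : ℝ) :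
    ∫ z, exp (-(x - z) ^ 2 / a) = √(π * a) := by
  rw [integral_sub_left_eq_self fun w => exp (-w ^ 2 / a)]
  simpa only [neg_mul, inv_mul_eq_div, neg_div, div_inv_eq_mul] using integral_gaussian a⁻¹

lemma setIntegral_abs_sq_le_of_abs_le_gaussian {S : Set ℝ} (hS : MeasurableSet S) {f : ℝ → ℝ}
    {D : ℝ} (ha : 0 < a)
    (hf : ∀ z ∈ S, |f z| ≤ D * (exp (-(x - z) ^ 2 / (2 * a)) + exp (-(y - z) ^ 2 / (2 * a)))) :
    ∫ z in S, |f z| ^ 2 ≤ 4 * D ^ 2 * √(π * a) := by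
  have sq_gauss (w : ℝ) : exp (-w ^ 2 / (2 * a)) ^ 2 = exp (-w ^ 2 / a) := by
    rw [← exp_nat_mul]; congr 1; field_simp; ring
  set g : ℝ → ℝ := fun z => 2 * D ^ 2 * (exp (-(x - z) ^ 2 / a) + exp (-(y - z) ^ 2 / a))
  have integrable_g : Integrable g := ((integrable_exp_neg_sub_sq_div ha x).add
    (integrable_exp_neg_sub_sq_div ha y)).const_mul _
  have sq_le_g : ∀ z ∈ S, |f z| ^ 2 ≤ g z := fun z hz => calc
    |f z| ^ 2 ≤ (D * (exp (-(x - z) ^ 2 / (2 * a)) + exp (-(y - z) ^ 2 / (2 * a)))) ^ 2 := by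
      gcongr; exact hf z hz
    _ ≤ D ^ 2 * (2 * (exp (-(x - z) ^ 2 / (2 * a)) ^ 2 + exp (-(y - z) ^ 2 / (2 * a)) ^ 2)) := by
      rw [mul_pow]; gcongr; exact add_sq_le
    _ = g z := by rw [sq_gauss, sq_gauss, ← mul_assoc, mul_comm (D ^ 2)]
  calc ∫ z in S, |f z| ^ 2
      ≤ ∫ z in S, g z := integral_mono_of_nonneg (.of_forall fun z => by positivity)
          integrable_g.integrableOn (ae_restrict_of_forall_mem hS sq_le_g)
    _ ≤ ∫ z, g z := setIntegral_le_integral integrable_g (.of_forall fun z => by positivity)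
    _ = 4 * D ^ 2 * √(π * a) := by
        rw [integral_const_mul, integral_add (integrable_exp_neg_sub_sq_div ha x)
          (integrable_exp_neg_sub_sq_div ha y), integral_exp_neg_sub_sq_div,
          integral_exp_neg_sub_sq_div]
        ring

end Gaussian

section HeatKernel

/-- The spatial derivative `∂_x G(t,x,y)`, see `hasDerivAt_G`. -/
noncomputable def dxG (t x y : ℝ) : ℝ :=
  (√(4 * π * t))⁻¹ *
    ((x + y) / (2 * t) * exp (-(x + y) ^ 2 / (4 * t)) -
      (x - y) / (2 * t) * exp (-(x - y) ^ 2 / (4 * t)))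

/-- The spatial derivative `∂_x G_r(t,x,y)`, see `hasDerivAt_Gr`. -/
noncomputable def dxGr (r t x y : ℝ) : ℝ := exp (-r * (x - y)) * (dxG t x y - r * G t x y)

/-- The constant in the Gaussian bounds for `G_r` and `∂_x G_r` at time `t`. The exponential comes
from completing the square, the factor `1 + |r| √t` from differentiating the weight. -/
noncomputable def gaussConst (r t : ℝ) : ℝ := exp (4 * r ^ 2 * t) * (1 + |r| * √t)

variable {t x y z : ℝ}

lemma gaussConst_pos (r t : ℝ) : 0 < gaussConst r t := by
  unfold gaussConst; positivity

lemma gaussConst_mono (r : ℝ) : Monotone (gaussConst r) := fun s t hst => by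
  unfold gaussConst; gcongr

lemma hasDerivAt_G (t x y : ℝ) : HasDerivAt (fun ξ => G t ξ y) (dxG t x y) x := by
  have direct := (((hasDerivAt_id' x).sub_const y).fun_pow 2).fun_neg.div_const (4 * t) |>.exp
  have reflected := (((hasDerivAt_id' x).add_const y).fun_pow 2).fun_neg.div_const (4 * t) |>.exp
  refine ((direct.fun_sub reflected).const_mul (√(4 * π * t))⁻¹).congr_deriv ?_
  unfold dxG
  field_simp
  ring

lemma hasDerivAt_Gr (r t x y : ℝ) : HasDerivAt (fun ξ => Gr r t ξ y) (dxGr r t x y) x := by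
  have weight := (((hasDerivAt_id' x).sub_const y).const_mul (-r)).exp
  refine (weight.fun_mul (hasDerivAt_G t x y)).congr_deriv ?_
  unfold dxGr
  ring

lemma inv_sqrt_four_mul_pi_mul_le (ht : 0 < t) : (√(4 * π * t))⁻¹ ≤ (2 * √t)⁻¹ := by
  have sqrt_four : √4 = 2 := by norm_num
  have one_le_sqrt_pi : 1 ≤ √π := one_le_sqrt.2 (by linarith [pi_gt_three])
  rw [sqrt_mul (by positivity), sqrt_mul (by norm_num), sqrt_four]
  gcongr
  linarith

lemma abs_G_le (ht : 0 < t) (hxy : 0 ≤ x * y) :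
    |G t x y| ≤ (√t)⁻¹ * exp (-(x - y) ^ 2 / (8 * t)) := by
  have nonneg := sub_nonneg.2
    (exp_neg_add_sq_div_le_exp_neg_sub_sq_div (a := 4 * t) (by positivity) hxy)
  have widen : exp (-(x - y) ^ 2 / (4 * t)) ≤ exp (-(x - y) ^ 2 / (8 * t)) :=
    exp_neg_sq_div_le_of_le (by positivity) (by linarith) _
  have prefactor : (√(4 * π * t))⁻¹ ≤ (√t)⁻¹ := (inv_sqrt_four_mul_pi_mul_le ht).trans <| by
    gcongr; linarith [sqrt_nonneg t]
  rw [G, abs_of_nonneg (by positivity)]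
  gcongr
  linarith [exp_pos (-(x + y) ^ 2 / (4 * t))]

lemma abs_div_mul_gaussian_le (ht : 0 < t) (w : ℝ) :
    |w / (2 * t) * exp (-w ^ 2 / (4 * t))| ≤ (√t)⁻¹ * exp (-w ^ 2 / (8 * t)) := by
  have linear_le : |w| * exp (-w ^ 2 / (4 * t)) ≤ 2 * √t * exp (-w ^ 2 / (8 * t)) := by
    convert abs_mul_exp_neg_sq_div_le (a := 4 * t) (by positivity) w using 4
    · rw [sqrt_mul (by norm_num)]; norm_num
    · ring
  rw [abs_mul, abs_div, abs_exp, abs_of_pos (by positivity : 0 < 2 * t)]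
  calc |w| / (2 * t) * exp (-w ^ 2 / (4 * t))
      = |w| * exp (-w ^ 2 / (4 * t)) / (2 * (√t * √t)) := by rw [mul_self_sqrt ht.le]; ring
    _ ≤ 2 * √t * exp (-w ^ 2 / (8 * t)) / (2 * (√t * √t)) := by gcongr
    _ = (√t)⁻¹ * exp (-w ^ 2 / (8 * t)) := by field_simp

lemma abs_dxG_le (ht : 0 < t) (hxy : 0 ≤ x * y) :
    |dxG t x y| ≤ t⁻¹ * exp (-(x - y) ^ 2 / (8 * t)) := by
  have reflected_le := exp_neg_add_sq_div_le_exp_neg_sub_sq_div (a := 8 * t) (by positivity) hxy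
  rw [dxG, abs_mul, abs_of_nonneg (by positivity)]
  calc _ ≤ (2 * √t)⁻¹ * ((√t)⁻¹ * exp (-(x - y) ^ 2 / (8 * t)) +
        (√t)⁻¹ * exp (-(x - y) ^ 2 / (8 * t))) := by
        gcongr ?_ * ?_
        · exact inv_sqrt_four_mul_pi_mul_le ht
        · exact (abs_sub _ _).trans (add_le_add
            ((abs_div_mul_gaussian_le ht _).trans (by gcongr))
            (abs_div_mul_gaussian_le ht _))
    _ = (√t * √t)⁻¹ * exp (-(x - y) ^ 2 / (8 * t)) := by field_simp; norm_num
    _ = t⁻¹ * exp (-(x - y) ^ 2 / (8 * t)) := by rw [mul_self_sqrt ht.le]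

lemma exp_weight_mul_gaussian_le (r : ℝ) (ht : 0 < t) (w : ℝ) :
    exp (-r * w) * exp (-w ^ 2 / (8 * t)) ≤
      exp (4 * r ^ 2 * t) * exp (-w ^ 2 / (16 * t)) := by
  convert exp_mul_mul_exp_neg_sq_div_le (a := 8 * t) (by positivity) (-r) w using 3 <;> ring

lemma abs_Gr_le (r : ℝ) (ht : 0 < t) (hxy : 0 ≤ x * y) :
    |Gr r t x y| ≤ gaussConst r t * (√t)⁻¹ * exp (-(x - y) ^ 2 / (16 * t)) := by
  rw [Gr, abs_mul, abs_exp]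
  calc exp (-r * (x - y)) * |G t x y|
      ≤ exp (-r * (x - y)) * ((√t)⁻¹ * exp (-(x - y) ^ 2 / (8 * t))) := by
        gcongr; exact abs_G_le ht hxy
    _ = (√t)⁻¹ * (exp (-r * (x - y)) * exp (-(x - y) ^ 2 / (8 * t))) := by ring
    _ ≤ (√t)⁻¹ * (exp (4 * r ^ 2 * t) * exp (-(x - y) ^ 2 / (16 * t))) := by
        gcongr ?_ * ?_; exact exp_weight_mul_gaussian_le r ht _
    _ = exp (4 * r ^ 2 * t) * 1 * (√t)⁻¹ * exp (-(x - y) ^ 2 / (16 * t)) := by ring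
    _ ≤ gaussConst r t * (√t)⁻¹ * exp (-(x - y) ^ 2 / (16 * t)) := by
        unfold gaussConst; gcongr; exact le_add_of_nonneg_right (by positivity)

lemma abs_dxGr_le (r : ℝ) (ht : 0 < t) (hxy : 0 ≤ x * y) :
    |dxGr r t x y| ≤ gaussConst r t * t⁻¹ * exp (-(x - y) ^ 2 / (16 * t)) := by
  have inv_sqrt_eq : (√t)⁻¹ = √t * t⁻¹ := by
    rw [← div_eq_mul_inv, sqrt_div_self', one_div]
  rw [dxGr, abs_mul, abs_exp]
  calc exp (-r * (x - y)) * |dxG t x y - r * G t x y|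
      ≤ exp (-r * (x - y)) * (t⁻¹ * exp (-(x - y) ^ 2 / (8 * t)) +
          |r| * ((√t)⁻¹ * exp (-(x - y) ^ 2 / (8 * t)))) := by
        gcongr
        refine (abs_sub _ _).trans (add_le_add (abs_dxG_le ht hxy) ?_)
        rw [abs_mul]
        gcongr
        exact abs_G_le ht hxy
    _ = (1 + |r| * √t) * t⁻¹ * (exp (-r * (x - y)) * exp (-(x - y) ^ 2 / (8 * t))) := by
        rw [inv_sqrt_eq]; ring
    _ ≤ (1 + |r| * √t) * t⁻¹ * (exp (4 * r ^ 2 * t) * exp (-(x - y) ^ 2 / (16 * t))) := by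
        gcongr ?_ * ?_; exact exp_weight_mul_gaussian_le r ht _
    _ = gaussConst r t * t⁻¹ * exp (-(x - y) ^ 2 / (16 * t)) := by
        unfold gaussConst; ring

lemma abs_dxGr_le_recenter (r : ℝ) (ht : 0 < t) (hyz : 0 ≤ y * z) (hxy : |x - y| ≤ √t) :
    |dxGr r t y z| ≤ exp 1 * gaussConst r t * t⁻¹ * exp (-(x - z) ^ 2 / (32 * t)) := by
  have sq_le : (x - y) ^ 2 / (16 * t) ≤ 1 := by
    rw [div_le_one (by positivity)]
    linarith [(le_sqrt (abs_nonneg _) ht.le).1 hxy, sq_abs (x - y)]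
  have recenter : exp (-(y - z) ^ 2 / (16 * t)) ≤ exp 1 * exp (-(x - z) ^ 2 / (32 * t)) := calc
    _ ≤ exp ((x - y) ^ 2 / (16 * t)) * exp (-(x - z) ^ 2 / (2 * (16 * t))) :=
      exp_neg_sub_sq_div_le_recenter (by positivity) x y z
    _ ≤ exp 1 * exp (-(x - z) ^ 2 / (32 * t)) := by
      rw [← mul_assoc 2 16 t]; norm_num only; gcongr
  calc |dxGr r t y z|
      ≤ gaussConst r t * t⁻¹ * exp (-(y - z) ^ 2 / (16 * t)) := abs_dxGr_le r ht hyz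
    _ ≤ gaussConst r t * t⁻¹ * (exp 1 * exp (-(x - z) ^ 2 / (32 * t))) := by
        have := gaussConst_pos r t; gcongr
    _ = _ := by ring

lemma abs_Gr_sub_le_of_abs_sub_le_sqrt (r : ℝ) (ht : 0 < t) (hx : 0 ≤ x) (hy : 0 ≤ y)
    (hz : 0 ≤ z) (hxy : |x - y| ≤ √t) :
    |Gr r t x z - Gr r t y z| ≤
      exp 1 * gaussConst r t * t⁻¹ * exp (-(x - z) ^ 2 / (32 * t)) * |x - y| := by
  refine (convex_uIcc x y).norm_image_sub_le_of_norm_hasDerivWithin_le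
    (f := fun ξ => Gr r t ξ z) (fun ξ _ => (hasDerivAt_Gr r t ξ z).hasDerivWithinAt)
    (fun ξ hξ => ?_) right_mem_uIcc left_mem_uIcc
  have hξ₀ : 0 ≤ ξ := (le_min hx hy).trans hξ.1
  have hxξ : |x - ξ| ≤ √t := by
    rw [abs_sub_comm] at hxy ⊢
    exact (abs_sub_left_of_mem_uIcc hξ).trans hxy
  exact abs_dxGr_le_recenter r ht (mul_nonneg hξ₀ hz) hxξ

lemma abs_Gr_sub_le (r : ℝ) (ht : 0 < t) (hx : 0 ≤ x) (hy : 0 ≤ y) (hz : 0 ≤ z) :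
    |Gr r t x z - Gr r t y z| ≤
      exp 1 * gaussConst r t * (√t)⁻¹ * min 1 (|x - y| / √t) *
        (exp (-(x - z) ^ 2 / (32 * t)) + exp (-(y - z) ^ 2 / (32 * t))) := by
  have hK := gaussConst_pos r t
  rcases le_total |x - y| √t with near | far
  · rw [min_eq_right ((div_le_one (sqrt_pos.2 ht)).2 near)]
    calc |Gr r t x z - Gr r t y z|
        ≤ exp 1 * gaussConst r t * t⁻¹ * exp (-(x - z) ^ 2 / (32 * t)) * |x - y| :=
          abs_Gr_sub_le_of_abs_sub_le_sqrt r ht hx hy hz near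
      _ = exp 1 * gaussConst r t * (√t)⁻¹ * (|x - y| / √t) * exp (-(x - z) ^ 2 / (32 * t)) := by
          rw [← mul_self_sqrt ht.le, mul_inv, mul_self_sqrt ht.le]; ring
      _ ≤ _ := by gcongr; exact le_add_of_nonneg_right (exp_pos _).le
  · have abs_Gr_le_wide {ξ : ℝ} (hξ : 0 ≤ ξ) : |Gr r t ξ z| ≤
        exp 1 * gaussConst r t * (√t)⁻¹ * exp (-(ξ - z) ^ 2 / (32 * t)) := calc
      _ ≤ 1 * gaussConst r t * (√t)⁻¹ * exp (-(ξ - z) ^ 2 / (16 * t)) := by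
          rw [one_mul]; exact abs_Gr_le r ht (mul_nonneg hξ hz)
      _ ≤ _ := by
          gcongr ?_ * _ * _ * ?_
          · exact one_le_exp zero_le_one
          · exact exp_neg_sq_div_le_of_le (by positivity) (by linarith) _
    rw [min_eq_left ((one_le_div (sqrt_pos.2 ht)).2 far), mul_one, mul_add]
    exact (abs_sub _ _).trans (add_le_add (abs_Gr_le_wide hx) (abs_Gr_le_wide hy))

lemma integral_sq_Gr_sub_le (r : ℝ) (ht : 0 < t) (hx : 0 ≤ x) (hy : 0 ≤ y) :
    ∫ z in Ioi (0 : ℝ), |Gr r t x z - Gr r t y z| ^ 2 ≤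
      16 * √π * (exp 1 * gaussConst r t) ^ 2 *
        min (t ^ (-1 / 2 : ℝ)) ((x - y) ^ 2 * t ^ (-3 / 2 : ℝ)) := by
  have ratio_nonneg : 0 ≤ |x - y| / √t := by positivity
  have sq_min : min 1 (|x - y| / √t) ^ 2 = min 1 ((x - y) ^ 2 * t⁻¹) := by
    rw [pow_left_monotoneOn.map_min zero_le_one ratio_nonneg, one_pow, div_pow, sq_abs,
      sq_sqrt ht.le, div_eq_mul_inv]
  have sqrt_sixteen : √16 = 4 := by norm_num
  have rpow_neg_half : t ^ (-1 / 2 : ℝ) = (√t)⁻¹ := by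
    rw [neg_div, rpow_neg ht.le, sqrt_eq_rpow]
  have rpow_neg_three_halves : t ^ (-3 / 2 : ℝ) = (√t)⁻¹ * t⁻¹ := by
    rw [← rpow_neg_half, ← rpow_neg_one, ← rpow_add ht]; norm_num
  calc ∫ z in Ioi (0 : ℝ), |Gr r t x z - Gr r t y z| ^ 2
      ≤ 4 * (exp 1 * gaussConst r t * (√t)⁻¹ * min 1 (|x - y| / √t)) ^ 2 * √(π * (16 * t)) := by
        refine setIntegral_abs_sq_le_of_abs_le_gaussian measurableSet_Ioi (by positivity)
          (x := x) (y := y) fun z hz => ?_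
        convert abs_Gr_sub_le r ht hx hy (le_of_lt hz) using 5 <;> ring
    _ = 16 * √π * (exp 1 * gaussConst r t) ^ 2 * ((√t)⁻¹ * min 1 ((x - y) ^ 2 * t⁻¹)) := by
        rw [mul_pow _ (min _ _), sq_min, sqrt_mul pi_nonneg, sqrt_mul (by norm_num),
          sqrt_sixteen]
        field_simp
        norm_num
        ring
    _ = _ := by
        rw [mul_min_of_nonneg _ _ (by positivity), rpow_neg_half, rpow_neg_three_halves]
        congr 2 <;> ring

end HeatKernel

section MinRpow

variable {a b c q : ℝ}

lemma rpow_le_rpow_sub_mul_rpow_iff {t : ℝ} (hab : b < a) (hc : 0 < c) (ht : 0 < t) :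
    t ^ a ≤ c ^ (a - b) * t ^ b ↔ t ≤ c := by
  rw [← div_le_iff₀ (rpow_pos_of_pos ht b), ← rpow_sub ht,
    rpow_le_rpow_iff ht.le hc.le (sub_pos.2 hab)]

lemma eqOn_min_rpow_Ioc (hab : b < a) (hc : 0 < c) :
    EqOn (fun t => min (t ^ a) (c ^ (a - b) * t ^ b)) (fun t => t ^ a) (Ioc 0 c) :=
  fun _ ht => min_eq_left ((rpow_le_rpow_sub_mul_rpow_iff hab hc ht.1).2 ht.2)

lemma eqOn_min_rpow_Ioi (hab : b < a) (hc : 0 < c) :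
    EqOn (fun t => min (t ^ a) (c ^ (a - b) * t ^ b)) (fun t => c ^ (a - b) * t ^ b) (Ioi c) :=
  fun _ ht => min_eq_right <| le_of_not_ge <|
    mt (rpow_le_rpow_sub_mul_rpow_iff hab hc (hc.trans ht)).1 (not_le.2 ht)

lemma integrableOn_Ioc_min_rpow (ha : -1 < a) (hab : b < a) (hc : 0 < c) :
    IntegrableOn (fun t => min (t ^ a) (c ^ (a - b) * t ^ b)) (Ioc 0 c) :=
  ((intervalIntegrable_iff_integrableOn_Ioc_of_le hc.le).1
    (intervalIntegral.intervalIntegrable_rpow' ha)).congr_fun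
    (eqOn_min_rpow_Ioc hab hc).symm measurableSet_Ioc

lemma integrableOn_Ioi_min_rpow (hb : b < -1) (hab : b < a) (hc : 0 < c) :
    IntegrableOn (fun t => min (t ^ a) (c ^ (a - b) * t ^ b)) (Ioi c) :=
  IntegrableOn.congr_fun ((integrableOn_Ioi_rpow_of_lt hb hc).const_mul _)
    (eqOn_min_rpow_Ioi hab hc).symm measurableSet_Ioi

lemma integrableOn_Ioi_zero_min_rpow (ha : -1 < a) (hb : b < -1) (hc : 0 < c) :
    IntegrableOn (fun t => min (t ^ a) (c ^ (a - b) * t ^ b)) (Ioi 0) := by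
  rw [← Ioc_union_Ioi_eq_Ioi hc.le]
  exact (integrableOn_Ioc_min_rpow ha (hb.trans ha) hc).union
    (integrableOn_Ioi_min_rpow hb (hb.trans ha) hc)

lemma integral_Ioi_zero_min_rpow (ha : -1 < a) (hb : b < -1) (hc : 0 < c) :
    ∫ t in Ioi 0, min (t ^ a) (c ^ (a - b) * t ^ b) =
      ((a + 1)⁻¹ - (b + 1)⁻¹) * c ^ (a + 1) := by
  have hab : b < a := hb.trans ha
  have integral_small : ∫ t in Ioc 0 c, t ^ a = c ^ (a + 1) / (a + 1) := by
    rw [← intervalIntegral.integral_of_le hc.le, integral_rpow (.inl ha),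
      zero_rpow (by linarith), sub_zero]
  have rpow_mul_rpow : c ^ (a - b) * c ^ (b + 1) = c ^ (a + 1) := by
    rw [← rpow_add hc]; ring_nf
  rw [← Ioc_union_Ioi_eq_Ioi hc.le, setIntegral_union Ioc_disjoint_Ioi_same measurableSet_Ioi
      (integrableOn_Ioc_min_rpow ha hab hc) (integrableOn_Ioi_min_rpow hb hab hc),
    setIntegral_congr_fun measurableSet_Ioc (eqOn_min_rpow_Ioc hab hc),
    setIntegral_congr_fun measurableSet_Ioi (eqOn_min_rpow_Ioi hab hc),
    integral_small, integral_const_mul, integral_Ioi_rpow_of_lt hb hc, ← rpow_mul_rpow]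
  ring

lemma min_rpow_rpow {t : ℝ} (ht : 0 ≤ t) (hc : 0 ≤ c) (hq : 0 ≤ q) :
    min (t ^ a) (c ^ (a - b) * t ^ b) ^ q =
      min (t ^ (a * q)) (c ^ (a * q - b * q) * t ^ (b * q)) := by
  rw [(monotoneOn_rpow_Ici_of_exponent_nonneg hq).map_min (rpow_nonneg ht a)
      (mul_nonneg (rpow_nonneg hc _) (rpow_nonneg ht b)),
    mul_rpow (rpow_nonneg hc _) (rpow_nonneg ht b), ← rpow_mul ht, ← rpow_mul ht, ← rpow_mul hc,
    sub_mul]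

lemma setIntegral_comp_sub_rpow_le {F : ℝ → ℝ} {K s : ℝ} (hK : 0 ≤ K) (hc : 0 < c) (hq : 0 ≤ q)
    (ha : -1 < a * q) (hb : b * q < -1) (hs : 0 ≤ s) (hF₀ : ∀ t ∈ Ioc 0 s, 0 ≤ F t)
    (hF : ∀ t ∈ Ioc 0 s, F t ≤ K * min (t ^ a) (c ^ (a - b) * t ^ b)) :
    ∫ u in Ioc 0 s, F (s - u) ^ q ≤
      K ^ q * ((a * q + 1)⁻¹ - (b * q + 1)⁻¹) * c ^ (a * q + 1) := by
  set g : ℝ → ℝ := fun t => min (t ^ (a * q)) (c ^ (a * q - b * q) * t ^ (b * q))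
  have integrable_g : IntegrableOn g (Ioi 0) :=
    integrableOn_Ioi_zero_min_rpow ha hb hc
  have g_nonneg : ∀ t ∈ Ioi (0 : ℝ), 0 ≤ g t := fun t (ht : 0 < t) => by positivity
  have rpow_le : ∀ t ∈ Ioc 0 s, F t ^ q ≤ K ^ q * g t := fun t ht => by
    have ht₀ : 0 < t := ht.1
    calc F t ^ q ≤ (K * min (t ^ a) (c ^ (a - b) * t ^ b)) ^ q :=
          rpow_le_rpow (hF₀ t ht) (hF t ht) hq
      _ = K ^ q * g t := by rw [mul_rpow hK (by positivity), min_rpow_rpow ht₀.le hc.le hq]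
  calc ∫ u in Ioc 0 s, F (s - u) ^ q
      = ∫ t in Ioc 0 s, F t ^ q := by
        rw [← intervalIntegral.integral_of_le hs, ← intervalIntegral.integral_of_le hs,
          intervalIntegral.integral_comp_sub_left (fun t => F t ^ q), sub_self, sub_zero]
    _ ≤ ∫ t in Ioc 0 s, K ^ q * g t := integral_mono_of_nonneg
        (ae_restrict_of_forall_mem measurableSet_Ioc fun t ht => rpow_nonneg (hF₀ t ht) q)
        ((integrable_g.mono_set Ioc_subset_Ioi_self).const_mul _)
        (ae_restrict_of_forall_mem measurableSet_Ioc rpow_le)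
    _ ≤ K ^ q * ∫ t in Ioi 0, g t := by
        rw [integral_const_mul]
        gcongr ?_ * ?_
        exact setIntegral_mono_set integrable_g
          (ae_restrict_of_forall_mem measurableSet_Ioi g_nonneg) Ioc_subset_Ioi_self.eventuallyLE
    _ = _ := by rw [integral_Ioi_zero_min_rpow ha hb hc, mul_assoc]

end MinRpow

lemma exists_integral_rpow_integral_sq_Gr_sub_le (r T : ℝ) {q : ℝ} (hq : 2 / 3 < q)
    (hq2 : q < 2) :
    ∃ C > 0, ∀ x ≥ 0, ∀ y ≥ 0, ∀ s ∈ Icc 0 T,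
      ∫ u in Ioc 0 s, (∫ z in Ioi (0 : ℝ), |Gr r (s - u) x z - Gr r (s - u) y z| ^ 2) ^ q ≤
        C * |x - y| ^ (2 - q) := by
  set K := 16 * √π * (exp 1 * gaussConst r T) ^ 2
  have hK : 0 < K := by have := gaussConst_pos r T; positivity
  set M := (-1 / 2 * q + 1)⁻¹ - (-3 / 2 * q + 1)⁻¹
  have hM : 0 < M := sub_pos.2 <|
    (inv_neg''.2 (by linarith)).trans (inv_pos.2 (by linarith))
  refine ⟨K ^ q * M, by positivity, fun x hx y hy s hs => ?_⟩
  rcases eq_or_ne x y with rfl | hxy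
  · simp [zero_rpow (by linarith : q ≠ 0), zero_rpow (by linarith : 2 - q ≠ 0)]
  have hc : 0 < (x - y) ^ 2 := sq_pos_of_ne_zero (sub_ne_zero.2 hxy)
  have hpow : |x - y| ^ (2 - q) = ((x - y) ^ 2) ^ (-1 / 2 * q + 1) := by
    rw [← sq_abs, ← rpow_natCast, ← rpow_mul (abs_nonneg _)]
    congr 1; push_cast; ring
  rw [hpow]
  refine setIntegral_comp_sub_rpow_le hK.le hc (by linarith) (by linarith) (by linarith) hs.1
    (F := fun t => ∫ z in Ioi (0 : ℝ), |Gr r t x z - Gr r t y z| ^ 2)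
    (fun t _ => integral_nonneg fun z => sq_nonneg _) fun t ht => ?_
  have hsub : (-1 / 2 - -3 / 2 : ℝ) = 1 := by norm_num
  have gaussConst_le : gaussConst r t ≤ gaussConst r T := gaussConst_mono r (ht.2.trans hs.2)
  rw [hsub, rpow_one]
  refine (integral_sq_Gr_sub_le r ht.1 hx hy).trans ?_
  have := gaussConst_pos r t; have := ht.1
  unfold K
  gcongr

/-- Lemma A.1 (iii) of Hambly–Kalsi: space-increment bound for `G_r`. -/
theorem stmt_2 (r T p : ℝ) (hT : 0 < T) (hp : 4 < p) :
    ∃ C > (0:ℝ), ∀ x ≥ (0:ℝ), ∀ y ≥ (0:ℝ), ∀ s ∈ Icc (0:ℝ) T,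
      (∫ u in Ioc (0:ℝ) s,
          (∫ z in Ioi (0:ℝ), |Gr r (s - u) x z - Gr r (s - u) y z| ^ 2) ^ (p / (p - 2)))
          ^ ((p - 2) / 2)
        ≤ C * |x - y| ^ ((p - 4) / 2) := by
  have hp2 : 0 < p - 2 := by linarith
  have hq1 : 1 < p / (p - 2) := by rw [one_lt_div hp2]; linarith
  have hq2 : p / (p - 2) < 2 := by rw [div_lt_iff₀ hp2]; linarith
  have hexp : (2 - p / (p - 2)) * ((p - 2) / 2) = (p - 4) / 2 := by field_simp; ring
  set q := p / (p - 2)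
  obtain ⟨C, hC, hbound⟩ := exists_integral_rpow_integral_sq_Gr_sub_le r T (by linarith) hq2
  refine ⟨C ^ ((p - 2) / 2), rpow_pos_of_pos hC _, fun x hx y hy s hs => ?_⟩
  calc _ ≤ (C * |x - y| ^ (2 - q)) ^ ((p - 2) / 2) :=
        rpow_le_rpow (integral_nonneg fun u => rpow_nonneg (integral_nonneg fun z => sq_nonneg _) q)
          (hbound x hx y hy s hs) (by linarith)
    _ = C ^ ((p - 2) / 2) * |x - y| ^ ((p - 4) / 2) := by
        rw [mul_rpow hC.le (by positivity), ← rpow_mul (abs_nonneg _), hexp]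
end

section
/- Let r ∈ ℝ and T > 0. Then there exists a constant C = C(r,T) > 0 such that for every continuous u₀ : [0,∞) → ℝ with ‖u₀‖_{L_r} < ∞, sup_{t∈(0,T]} sup_{x≥0} e^{−rx} | ∫_0^∞ G(t,x,y) u₀(y) dy | ≤ C ‖u₀‖_{L_r}. -/
/-!
By the method of images, `G t x` is the difference of the Gaussian densities of variance `2t`
centred at `x` and `-x`, so it lies between `0` and the direct one. Writing
`e^{-rx} G(t,x,y) u₀(y) = G_r(t,x,y) · (e^{-ry} u₀(y))` reduces the bound to an estimate of the mass
of `G_r`, and `∫ G_r(t,x,y) dy` is at most `e^{-rx}` times the moment generating function at `r` of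
the Gaussian of mean `x` and variance `2t`, which is `e^{rx + r²t}`.
-/

open MeasureTheory Real Set Filter

section HeatKernel

open ProbabilityTheory
open scoped NNReal

lemma integrable_gaussianPDFReal_mul_exp (μ : ℝ) (v : ℝ≥0) (r : ℝ) :
    Integrable fun y => gaussianPDFReal μ v y * exp (r * y) := by
  obtain rfl | hv := eq_or_ne v 0
  · simp
  have h : Integrable (fun y => exp (r * y)) (gaussianReal μ v) := integrable_exp_mul_gaussianReal r
  rw [gaussianReal_of_var_ne_zero μ hv, integrable_withDensity_iff_integrable_smul'
    (measurable_gaussianPDF μ v) (ae_of_all _ fun _ => gaussianPDF_lt_top)] at h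
  simpa only [toReal_gaussianPDF, smul_eq_mul] using h

lemma integral_gaussianPDFReal_mul_exp (μ : ℝ) {v : ℝ≥0} (hv : v ≠ 0) (r : ℝ) :
    ∫ y, gaussianPDFReal μ v y * exp (r * y) = exp (μ * r + v * r ^ 2 / 2) := by
  have h : mgf id (gaussianReal μ v) r = ∫ y, gaussianPDFReal μ v y * exp (r * y) :=
    integral_gaussianReal_eq_integral_smul hv
  rw [← h, mgf_id_gaussianReal]

lemma G_eq_gaussianPDFReal_sub {t : ℝ} (ht : 0 ≤ t) (x y : ℝ) :
    G t x y = gaussianPDFReal x (2 * t).toNNReal y - gaussianPDFReal (-x) (2 * t).toNNReal y := by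
  simp only [G, gaussianPDFReal, coe_toNNReal _ (mul_nonneg zero_le_two ht)]
  ring_nf

lemma Gr_nonneg (r : ℝ) {t x y : ℝ} (ht : 0 ≤ t) (hx : 0 ≤ x) (hy : 0 ≤ y) : 0 ≤ Gr r t x y :=
  mul_nonneg (exp_nonneg _) (G_nonneg ht hx hy)

lemma Gr_eq_gaussianPDFReal_mul_exp_sub (r : ℝ) {t : ℝ} (ht : 0 ≤ t) (x y : ℝ) :
    Gr r t x y = exp (-r * x) * (gaussianPDFReal x (2 * t).toNNReal y * exp (r * y) -
      gaussianPDFReal (-x) (2 * t).toNNReal y * exp (r * y)) := by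
  rw [Gr, G_eq_gaussianPDFReal_sub ht, show -r * (x - y) = -r * x + r * y by ring, exp_add]
  ring

lemma integrable_Gr (r : ℝ) {t : ℝ} (ht : 0 ≤ t) (x : ℝ) : Integrable (Gr r t x) := by
  simp only [funext (Gr_eq_gaussianPDFReal_mul_exp_sub r ht x)]
  exact ((integrable_gaussianPDFReal_mul_exp _ _ r).sub
    (integrable_gaussianPDFReal_mul_exp _ _ r)).const_mul _

lemma setIntegral_Gr_le (r : ℝ) {t : ℝ} (ht : 0 < t) (x : ℝ) (s : Set ℝ) :
    ∫ y in s, Gr r t x y ≤ exp (r ^ 2 * t) := by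
  set v := (2 * t).toNNReal with hv
  let g : ℝ → ℝ := fun y => exp (-r * x) * (gaussianPDFReal x v y * exp (r * y))
  have hg_int : Integrable g := (integrable_gaussianPDFReal_mul_exp x v r).const_mul _
  have hg_nonneg (y : ℝ) : 0 ≤ g y := by
    have := gaussianPDFReal_nonneg x v y
    positivity
  have hGr_le (y : ℝ) : Gr r t x y ≤ g y := by
    rw [Gr_eq_gaussianPDFReal_mul_exp_sub r ht.le]
    have := gaussianPDFReal_nonneg (-x) v y
    exact mul_le_mul_of_nonneg_left (sub_le_self _ (by positivity)) (exp_nonneg _)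
  calc ∫ y in s, Gr r t x y
      ≤ ∫ y in s, g y :=
        setIntegral_mono (integrable_Gr r ht.le x).integrableOn hg_int.integrableOn hGr_le
    _ ≤ ∫ y, g y := setIntegral_le_integral hg_int (ae_of_all _ hg_nonneg)
    _ = exp (r ^ 2 * t) := by
        have hv_ne : v ≠ 0 := (toNNReal_pos.mpr (by positivity)).ne'
        rw [integral_const_mul, integral_gaussianPDFReal_mul_exp x hv_ne, ← exp_add, hv,
          coe_toNNReal _ (by positivity)]
        ring_nf

end HeatKernel

lemma LrNorm_nonneg (r : ℝ) (v : ℝ → ℝ) : 0 ≤ LrNorm r v :=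
  sSup_nonneg (forall_mem_image.mpr fun _ _ => by positivity)

lemma norm_exp_mul_le_LrNorm {r : ℝ} {v : ℝ → ℝ}
    (hv : BddAbove ((fun x => exp (-r * x) * |v x|) '' Ici 0)) {y : ℝ} (hy : 0 ≤ y) :
    ‖exp (-r * y) * v y‖ ≤ LrNorm r v := by
  rw [norm_mul, norm_of_nonneg (exp_nonneg _)]
  exact le_csSup hv (mem_image_of_mem _ hy)

lemma exp_mul_G_mul (r t x y a : ℝ) :
    exp (-r * x) * (G t x y * a) = Gr r t x y * (exp (-r * y) * a) := by
  rw [Gr, show -r * x = -r * (x - y) + -r * y by ring, exp_add]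
  ring

lemma integrableOn_G_mul {r t : ℝ} (ht : 0 ≤ t) (x : ℝ) {u₀ : ℝ → ℝ}
    (hu_meas : AEStronglyMeasurable u₀ (volume.restrict (Ioi 0)))
    (hu_bdd : BddAbove ((fun y => exp (-r * y) * |u₀ y|) '' Ici 0)) :
    IntegrableOn (fun y => G t x y * u₀ y) (Ioi 0) := by
  have hGr : IntegrableOn (fun y => Gr r t x y * (exp (-r * y) * u₀ y)) (Ioi 0) :=
    (integrable_Gr r ht x).integrableOn.mul_bdd
      ((by fun_prop : Continuous fun y => exp (-r * y)).aestronglyMeasurable.mul hu_meas)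
      (ae_restrict_of_forall_mem measurableSet_Ioi fun _ hy =>
        norm_exp_mul_le_LrNorm hu_bdd (le_of_lt hy))
  simp only [← exp_mul_G_mul] at hGr
  exact (integrable_const_mul_iff (exp_pos _).ne'.isUnit _).mp hGr

lemma exp_mul_abs_integral_G_mul_le {r t x : ℝ} (ht : 0 < t) (hx : 0 ≤ x) {u₀ : ℝ → ℝ}
    (hu_bdd : BddAbove ((fun y => exp (-r * y) * |u₀ y|) '' Ici 0)) :
    exp (-r * x) * |∫ y in Ioi (0 : ℝ), G t x y * u₀ y| ≤ exp (r ^ 2 * t) * LrNorm r u₀ := by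
  have hbound : ∀ y ∈ Ioi (0 : ℝ),
      ‖Gr r t x y * (exp (-r * y) * u₀ y)‖ ≤ Gr r t x y * LrNorm r u₀ := by
    intro y (hy : 0 < y)
    have hGr := Gr_nonneg r ht.le hx hy.le
    rw [norm_mul, norm_of_nonneg hGr]
    exact mul_le_mul_of_nonneg_left (norm_exp_mul_le_LrNorm hu_bdd hy.le) hGr
  calc exp (-r * x) * |∫ y in Ioi (0 : ℝ), G t x y * u₀ y|
      = ‖∫ y in Ioi (0 : ℝ), Gr r t x y * (exp (-r * y) * u₀ y)‖ := by
        simp only [← exp_mul_G_mul, integral_const_mul, norm_mul, norm_eq_abs, abs_exp]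
    _ ≤ ∫ y in Ioi (0 : ℝ), Gr r t x y * LrNorm r u₀ :=
        norm_integral_le_of_norm_le ((integrable_Gr r ht.le x).integrableOn.mul_const _)
          (ae_restrict_of_forall_mem measurableSet_Ioi hbound)
    _ = (∫ y in Ioi (0 : ℝ), Gr r t x y) * LrNorm r u₀ := integral_mul_const _ _
    _ ≤ exp (r ^ 2 * t) * LrNorm r u₀ :=
        mul_le_mul_of_nonneg_right (setIntegral_Gr_le r ht x _) (LrNorm_nonneg r u₀)

theorem stmt_5_general {r T : ℝ} {u₀ : ℝ → ℝ}
    (hu_meas : AEStronglyMeasurable u₀ (volume.restrict (Ioi 0)))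
    (hu_bdd : BddAbove ((fun y => exp (-r * y) * |u₀ y|) '' Ici 0))
    {t : ℝ} (ht : t ∈ Ioc 0 T) {x : ℝ} (hx : 0 ≤ x) :
    IntegrableOn (fun y => G t x y * u₀ y) (Ioi 0) ∧
      exp (-r * x) * |∫ y in Ioi (0 : ℝ), G t x y * u₀ y| ≤ exp (r ^ 2 * T) * LrNorm r u₀ := by
  refine ⟨integrableOn_G_mul ht.1.le x hu_meas hu_bdd,
    (exp_mul_abs_integral_G_mul_le ht.1 hx hu_bdd).trans ?_⟩
  gcongr
  exacts [LrNorm_nonneg r u₀, ht.2]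

/-- weighted sup bound for the heat semigroup acting on the initial condition. -/
theorem stmt_5 (r T : ℝ) (hT : 0 < T) :
    ∃ C > (0:ℝ), ∀ u₀ : ℝ → ℝ,
      ContinuousOn u₀ (Ici 0) →
      BddAbove ((fun x => Real.exp (-r * x) * |u₀ x|) '' Ici 0) →
      ∀ t ∈ Ioc (0:ℝ) T, ∀ x ≥ (0:ℝ),
        Real.exp (-r * x) * |∫ y in Ioi (0:ℝ), G t x y * u₀ y|
          ≤ C * LrNorm r u₀ := by
  exact ⟨exp (r ^ 2 * T), exp_pos _, fun u₀ hu_cont hu_bdd t ht x hx =>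
    (stmt_5_general ((hu_cont.mono Ioi_subset_Ici_self).aestronglyMeasurable measurableSet_Ioi)
      hu_bdd ht hx).2⟩
end

section
/- Let r ∈ ℝ and T > 0. Then there exists a constant C = C(r,T) > 0 such that whenever v₁, v₂ : [0,T]×[0,∞) → ℝ are continuous obstacles with ‖vᵢ‖_{C_r^T} < ∞, vᵢ(t,0) = 0 for every t ∈ [0,T] and vᵢ(0,·) ≤ 0 (i = 1,2), and (z₁,η₁), (z₂,η₂) are the corresponding solutions of the deterministic obstacle problem, then ‖z₁ − z₂‖_{C_r^T} ≤ C ‖v₁ − v₂‖_{C_r^T}. -/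
/-!
The constant is `C = e^{r²T}`. With `M = ‖v₁ - v₂‖`, the function `M e^{rx + r²t}` solves the heat
equation and dominates `v₁ - v₂`. Adding `ε e^{(r+1)x + ((r+1)²+1)t}` makes it a strict
supersolution `Φ` that also beats the growth `e^{rx}` of the solutions at infinity. It is enough to
show `z₁ - z₂ ≤ Φ`, then to let `ε → 0` and to exchange the indices.

Where `z₁ > z₂ + Φ` one has `z₁ > v₂ + Φ ≥ v₁`, so `η₁` does not charge this set and `z₁ - z₂` is a
distributional subsolution of the heat equation there. The weak maximum principle then gives
`z₁ - z₂ ≤ Φ`. To prove it for a subsolution `W` that is only continuous, mollify `W` in space: a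
positive value of `W - Φ` yields an interior maximum of the mollified function minus `Φ`, where the
first-order condition in time gives `Φ_t ≤ W_xx` and the second-order condition in space gives
`W_xx ≤ Φ_xx`, against `Φ_xx < Φ_t`.
-/

open MeasureTheory Real Set Filter

/-- `(z,η)` solves the heat equation on `[0,∞)` with Dirichlet boundary condition and
obstacle `v` (deterministic obstacle problem, Definition 2.5 of Hambly–Kalsi). In the
measure `η` on `ℝ × ℝ`, the first coordinate is the space variable `x ∈ (0,∞)` and the
second coordinate is the time variable `s ∈ [0,T]`. -/
def IsObstacleSol (r T : ℝ) (v z : ℝ → ℝ → ℝ) (η : Measure (ℝ × ℝ)) : Prop :=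
  -- (i) z ∈ C_r^T, z(t,0)=0, z(0,x)=0, z ≥ v
  ContinuousOn (Function.uncurry z) (Icc 0 T ×ˢ Ici 0) ∧
  CrBdd r T z ∧
  (∀ t ∈ Icc (0:ℝ) T, z t 0 = 0) ∧
  (∀ x ≥ (0:ℝ), z 0 x = 0) ∧
  (∀ t ∈ Icc (0:ℝ) T, ∀ x ≥ (0:ℝ), v t x ≤ z t x) ∧
  -- (ii) η is a measure on (0,∞)×[0,T] with ∫∫ (z - v) dη = 0
  η ((Ioi (0:ℝ) ×ˢ Icc (0:ℝ) T)ᶜ) = 0 ∧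
  (∫⁻ q, ENNReal.ofReal (z q.2 q.1 - v q.2 q.1) ∂η) = 0 ∧
  -- (iii) z weakly solves ∂z/∂t = ∂²z/∂x² + η
  (∀ t ∈ Icc (0:ℝ) T, ∀ φ : ℝ → ℝ,
    ContDiff ℝ (⊤ : ℕ∞) φ → HasCompactSupport φ → φ 0 = 0 →
    ∫ x in Ioi (0:ℝ), z t x * φ x =
      (∫ s in Ioc (0:ℝ) t, ∫ x in Ioi (0:ℝ), z s x * deriv (deriv φ) x) +
      ∫ q in (Ioi (0:ℝ) ×ˢ Ioc (0:ℝ) t), φ q.1 ∂η)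

open scoped Topology Convolution ContDiff

/-! ### Calculus and integration -/

lemma deriv_deriv_nonpos_of_isLocalMax {f : ℝ → ℝ} {x : ℝ} (hf : IsLocalMax f x)
    (hc : ContinuousAt f x) : deriv (deriv f) x ≤ 0 := by
  by_contra! hpos
  have hmin : IsLocalMin f x := isLocalMin_of_deriv_deriv_pos hpos hf.deriv_eq_zero hc
  have hconst : f =ᶠ[𝓝 x] fun _ => f x := by
    filter_upwards [hf, hmin] with y hle hge using le_antisymm hle hge
  have hzero : deriv (deriv f) x = 0 := by simpa using hconst.deriv.deriv_eq
  exact hpos.ne' hzero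

lemma nonneg_of_hasDerivAt_of_eventually_le_left {f : ℝ → ℝ} {f' t : ℝ} (hf : HasDerivAt f f' t)
    (hmax : ∀ᶠ s in 𝓝[<] t, f s ≤ f t) : 0 ≤ f' := by
  refine ge_of_tendsto (hasDerivAt_iff_tendsto_slope_left_right.1 hf).1 ?_
  filter_upwards [hmax, self_mem_nhdsWithin] with s hs hst
  rw [slope_def_field]
  exact div_nonneg_of_nonpos (sub_nonpos.2 hs) (sub_nonpos.2 (le_of_lt hst))

/-- If `f` is not integrable on `S t`, the Bochner integral has the junk value `0`; a fall to `0`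
would skip the values in between. -/
lemma monotoneOn_setIntegral_of_continuousOn {α : Type*} [MeasurableSpace α] {μ : Measure α}
    {f : α → ℝ} (hf : 0 ≤ f) {S : ℝ → Set α} (hS : Monotone S) {a b : ℝ}
    (hc : ContinuousOn (fun t => ∫ x in S t, f x ∂μ) (Icc a b)) :
    MonotoneOn (fun t => ∫ x in S t, f x ∂μ) (Icc a b) := by
  intro s hs t ht hst
  set F : ℝ → ℝ := fun t => ∫ x in S t, f x ∂μ
  by_contra! hlt
  have hzero : ∀ τ, s ≤ τ → F τ < F s → F τ = 0 := by
    refine fun τ hsτ hτ => integral_undef fun hfint => hτ.not_ge ?_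
    exact setIntegral_mono_set hfint (ae_of_all _ hf) (hS hsτ).eventuallyLE
  have hFt : F t = 0 := hzero t hst hlt
  have hFs : 0 < F s := hFt ▸ hlt
  obtain ⟨τ, hτ, hFτ⟩ : F s / 2 ∈ F '' Icc s t :=
    intermediate_value_Icc' hst (hc.mono (Icc_subset_Icc hs.1 ht.2))
      ⟨hFt ▸ (half_pos hFs).le, half_le_self hFs.le⟩
  have := hzero τ hτ.1 (by linarith)
  linarith

lemma continuous_integral_mul_of_hasCompactSupport {X : Type*} [TopologicalSpace X]
    {u : X → ℝ → ℝ} (hu : Continuous (Function.uncurry u)) {ψ : ℝ → ℝ} (hψ : Continuous ψ)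
    (hψc : HasCompactSupport ψ) : Continuous fun p => ∫ y, u p y * ψ y := by
  rw [← continuousOn_univ]
  refine continuousOn_integral_of_compact_support hψc ?_ fun p y _ hy => ?_
  · exact (hu.mul (hψ.comp continuous_snd)).continuousOn
  · rw [image_eq_zero_of_notMem_tsupport hy, mul_zero]

/-! ### Weak subsolutions of the heat equation -/

/-- The defect `⟨u(t), φ⟩ - ∫₀ᵗ ⟨u(s), φ''⟩ ds` of `u` in the heat equation tested with `φ`. If
`∂u/∂t = ∂²u/∂x² + η` weakly with `u(0,·) = 0`, it is the `η`-integral of `φ` up to time `t`. -/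
noncomputable def heatDefect (u : ℝ → ℝ → ℝ) (φ : ℝ → ℝ) (t : ℝ) : ℝ :=
  (∫ x, u t x * φ x) - ∫ s in (0 : ℝ)..t, ∫ x, u s x * deriv (deriv φ) x

/-- Weak subsolutions of the heat equation on a set `O` of points `(t, x)`: the defect decreases
on every time interval `[s, t]` for which `[s, t] × supp φ` lies in `O`. -/
def IsHeatSubsolutionOn (u : ℝ → ℝ → ℝ) (O : Set (ℝ × ℝ)) : Prop :=
  ∀ φ : ℝ → ℝ, ContDiff ℝ ∞ φ → HasCompactSupport φ → 0 ≤ φ → ∀ s t, s ≤ t →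
    Icc s t ×ˢ tsupport φ ⊆ O → heatDefect u φ t ≤ heatDefect u φ s

lemma IsHeatSubsolutionOn.mono {u : ℝ → ℝ → ℝ} {O O' : Set (ℝ × ℝ)}
    (h : IsHeatSubsolutionOn u O) (hO : O' ⊆ O) : IsHeatSubsolutionOn u O' :=
  fun φ hφ hφc hφ0 s t hst hsub => h φ hφ hφc hφ0 s t hst (hsub.trans hO)

lemma continuous_deriv_deriv {φ : ℝ → ℝ} (hφ : ContDiff ℝ ∞ φ) : Continuous (deriv (deriv φ)) :=
  (hφ.iterate_deriv 2).continuous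

lemma continuous_heatDefect {u : ℝ → ℝ → ℝ} (hu : Continuous (Function.uncurry u)) {φ : ℝ → ℝ}
    (hφ : ContDiff ℝ ∞ φ) (hφc : HasCompactSupport φ) : Continuous (heatDefect u φ) := by
  have hφ'' : Continuous fun s => ∫ x, u s x * deriv (deriv φ) x :=
    continuous_integral_mul_of_hasCompactSupport hu (continuous_deriv_deriv hφ) hφc.deriv.deriv
  exact (continuous_integral_mul_of_hasCompactSupport hu hφ.continuous hφc).sub
    (intervalIntegral.continuous_primitive (fun a b => hφ''.intervalIntegrable a b) 0)

lemma heatDefect_sub {u w : ℝ → ℝ → ℝ} (hu : Continuous (Function.uncurry u))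
    (hw : Continuous (Function.uncurry w)) {φ : ℝ → ℝ} (hφ : ContDiff ℝ ∞ φ)
    (hφc : HasCompactSupport φ) (t : ℝ) :
    heatDefect (fun t x => u t x - w t x) φ t = heatDefect u φ t - heatDefect w φ t := by
  have hpairing : ∀ ψ : ℝ → ℝ, Continuous ψ → HasCompactSupport ψ → ∀ s,
      ∫ x, (u s x - w s x) * ψ x = (∫ x, u s x * ψ x) - ∫ x, w s x * ψ x := by
    intro ψ hψ hψc s
    have hfint : ∀ f : ℝ → ℝ → ℝ, Continuous (Function.uncurry f) →
        Integrable fun x => f s x * ψ x := fun f hf =>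
      ((hf.uncurry_left s).mul hψ).integrable_of_hasCompactSupport hψc.mul_left
    simp only [sub_mul, integral_sub (hfint u hu) (hfint w hw)]
  have hinterval : ∀ f : ℝ → ℝ → ℝ, Continuous (Function.uncurry f) →
      IntervalIntegrable (fun s => ∫ x, f s x * deriv (deriv φ) x) volume 0 t := fun f hf =>
    (continuous_integral_mul_of_hasCompactSupport hf (continuous_deriv_deriv hφ)
      hφc.deriv.deriv).intervalIntegrable 0 t
  simp only [heatDefect, hpairing φ hφ.continuous hφc,
    hpairing _ (continuous_deriv_deriv hφ) hφc.deriv.deriv,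
    intervalIntegral.integral_sub (hinterval u hu) (hinterval w hw)]
  ring

/-! ### Mollification in space -/

/-- Mollification of `u` in the space variable by the kernel `g`. -/
noncomputable def mollify (g : ℝ → ℝ) (u : ℝ → ℝ → ℝ) (t : ℝ) : ℝ → ℝ := g ⋆ u t

section Mollify

variable {g : ℝ → ℝ} {u : ℝ → ℝ → ℝ}

lemma mollify_eq_integral (g : ℝ → ℝ) (u : ℝ → ℝ → ℝ) (t x : ℝ) :
    mollify g u t x = ∫ y, u t y * g (x - y) := by
  simp only [mollify, convolution_lsmul_swap, smul_eq_mul, mul_comm]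

lemma continuous_mollify (hg : Continuous g) (hgc : HasCompactSupport g)
    (hu : Continuous (Function.uncurry u)) : Continuous (Function.uncurry (mollify g u)) := by
  have hshift : Continuous (Function.uncurry fun (p : ℝ × ℝ) y => u p.1 (p.2 - y)) :=
    hu.comp (by fun_prop : Continuous fun q : (ℝ × ℝ) × ℝ => (q.1.1, q.1.2 - q.2))
  convert continuous_integral_mul_of_hasCompactSupport hshift hg hgc using 2 with p
  simp only [Function.uncurry, mollify, convolution_lsmul, smul_eq_mul, mul_comm]

lemma hasDerivAt_mollify (hg : ContDiff ℝ 1 g) (hgc : HasCompactSupport g)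
    (hu : Continuous (Function.uncurry u)) (t x : ℝ) :
    HasDerivAt (mollify g u t) (mollify (deriv g) u t x) x :=
  hgc.hasDerivAt_convolution_left _ hg (hu.uncurry_left t).locallyIntegrable x

lemma heatDefect_comp_const_sub (g : ℝ → ℝ) (u : ℝ → ℝ → ℝ) (t x : ℝ) :
    heatDefect u (fun y => g (x - y)) t =
      mollify g u t x - ∫ s in (0 : ℝ)..t, mollify (deriv (deriv g)) u s x := by
  have hderiv : deriv (fun y => g (x - y)) = fun y => -deriv g (x - y) :=
    funext fun y => deriv_comp_const_sub ..
  have hderiv2 : deriv (deriv fun y => g (x - y)) = fun y => deriv (deriv g) (x - y) := by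
    ext y
    rw [hderiv, deriv.fun_neg, deriv_comp_const_sub (f := deriv g), neg_neg]
  simp only [heatDefect, hderiv2, mollify_eq_integral]

end Mollify

/-! ### The weak maximum principle -/

lemma IsHeatSubsolutionOn.deriv_le_mollify_of_eventually_le_left {u : ℝ → ℝ → ℝ}
    {O : Set (ℝ × ℝ)} (h : IsHeatSubsolutionOn u O) (hu : Continuous (Function.uncurry u))
    {g : ℝ → ℝ} (hg : ContDiff ℝ ∞ g) (hgc : HasCompactSupport g) (hg0 : 0 ≤ g)
    {f : ℝ → ℝ} {f' t x : ℝ} (hf : HasDerivAt f f' t)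
    (hO : ∀ᶠ s in 𝓝[<] t, Icc s t ×ˢ tsupport (fun y => g (x - y)) ⊆ O)
    (hmax : ∀ᶠ s in 𝓝[<] t, mollify g u s x - f s ≤ mollify g u t x - f t) :
    f' ≤ mollify (deriv (deriv g)) u t x := by
  have hcont : Continuous fun s => mollify (deriv (deriv g)) u s x :=
    (continuous_mollify (continuous_deriv_deriv hg) hgc.deriv.deriv hu).uncurry_right x
  have hprim := (hcont.integral_hasStrictDerivAt 0 t).hasDerivAt.sub hf
  refine sub_nonneg.1 (nonneg_of_hasDerivAt_of_eventually_le_left hprim ?_)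
  filter_upwards [hO, hmax, self_mem_nhdsWithin] with s hsO hs hst
  have hdefect := h (fun y => g (x - y)) (hg.comp (by fun_prop))
    (hgc.comp_homeomorph (Homeomorph.subLeft x)) (fun y => hg0 (x - y)) s t (le_of_lt hst) hsO
  simp only [heatDefect_comp_const_sub] at hdefect
  simp only [Pi.sub_apply]
  linarith

lemma mollify_le_deriv_deriv_of_isLocalMax {u : ℝ → ℝ → ℝ} (hu : Continuous (Function.uncurry u))
    {g : ℝ → ℝ} (hg : ContDiff ℝ 2 g) (hgc : HasCompactSupport g) {f : ℝ → ℝ}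
    (hf : ContDiff ℝ 2 f) {t x : ℝ} (hmax : IsLocalMax (fun y => mollify g u t y - f y) x) :
    mollify (deriv (deriv g)) u t x ≤ deriv (deriv f) x := by
  have hderiv : ∀ y, HasDerivAt (fun y => mollify g u t y - f y)
      (mollify (deriv g) u t y - deriv f y) y := fun y =>
    (hasDerivAt_mollify (hg.of_le one_le_two) hgc hu t y).sub
      (hf.differentiable two_ne_zero y).hasDerivAt
  have hderiv2 : HasDerivAt (fun y => mollify (deriv g) u t y - deriv f y)
      (mollify (deriv (deriv g)) u t x - deriv (deriv f) x) x :=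
    (hasDerivAt_mollify hg.deriv' hgc.deriv hu t x).sub
      (hf.differentiable_deriv_two x).hasDerivAt
  have hle := deriv_deriv_nonpos_of_isLocalMax hmax (hderiv x).continuousAt
  rw [funext fun y => (hderiv y).deriv, hderiv2.deriv] at hle
  exact sub_nonpos.1 hle

lemma exists_bump_isMaxOn_mollify_sub {u Φ : ℝ → ℝ → ℝ} (hu : Continuous (Function.uncurry u))
    (hΦ : Continuous (Function.uncurry Φ)) {K : Set (ℝ × ℝ)} (hK : IsCompact K) {q : ℝ × ℝ}
    (hqK : q ∈ K) (hq : Φ q.1 q.2 < u q.1 q.2) :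
    ∃ g : ContDiffBump (0 : ℝ), ∃ p ∈ K,
      IsMaxOn (fun p => mollify (g.normed volume) u p.1 p.2 - Φ p.1 p.2) K p ∧
      ∀ p', dist p' p ≤ g.rOut → Φ p'.1 p'.2 < u p'.1 p'.2 := by
  set m := u q.1 q.2 - Φ q.1 q.2
  have hm0 : 0 < m / 4 := div_pos (sub_pos.2 hq) four_pos
  have hunif : ∀ f : ℝ × ℝ → ℝ, Continuous f →
      ∃ δ > 0, ∀ p p', dist p p' < δ → p ∈ K → dist (f p) (f p') < m / 4 := fun f hf => by
    simpa using Metric.mem_uniformity_dist.1 (hK.uniformContinuousAt_of_continuousAt f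
      (fun p _ => hf.continuousAt) (Metric.dist_mem_uniformity hm0))
  obtain ⟨δu, hδu, hunif_u⟩ := hunif _ hu
  obtain ⟨δU, hδU, hunif_U⟩ := hunif _ (hu.sub hΦ)
  let g : ContDiffBump (0 : ℝ) :=
    ⟨min δu δU / 4, min δu δU / 2, by positivity, by linarith [lt_min hδu hδU]⟩
  have hrOut : g.rOut < min δu δU := half_lt_self (lt_min hδu hδU)
  have happrox : ∀ p ∈ K, |mollify (g.normed volume) u p.1 p.2 - u p.1 p.2| ≤ m / 4 := by
    intro p hp
    refine g.dist_normed_convolution_le (hu.uncurry_left p.1).aestronglyMeasurable fun y hy => ?_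
    rw [dist_comm]
    refine (hunif_u p (p.1, y) ?_ hp).le
    rw [Prod.dist_eq, dist_self, max_eq_right dist_nonneg, dist_comm]
    exact (Metric.mem_ball.1 hy).trans (hrOut.trans_le (min_le_left _ _))
  have hcont : Continuous fun p : ℝ × ℝ => mollify (g.normed volume) u p.1 p.2 - Φ p.1 p.2 :=
    (continuous_mollify g.continuous_normed g.hasCompactSupport_normed hu).sub hΦ
  obtain ⟨p, hpK, hp⟩ := hK.exists_isMaxOn ⟨q, hqK⟩ hcont.continuousOn
  refine ⟨g, p, hpK, hp, fun p' hp' => ?_⟩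
  have hmaxq := hp hqK
  have hnear := hunif_U p p'
    (by rw [dist_comm]; exact hp'.trans_lt (hrOut.trans_le (min_le_right _ _))) hpK
  simp only [mem_ofPred_eq] at hmaxq
  simp only [Real.dist_eq, Pi.sub_apply, Function.uncurry] at hnear
  linarith [(abs_le.1 (happrox q hqK)).1, (abs_le.1 (happrox p hpK)).2, (abs_lt.1 hnear).2]

lemma tsupport_normed_comp_const_sub_subset (g : ContDiffBump (0 : ℝ)) (x : ℝ) :
    tsupport (fun y => g.normed volume (x - y)) ⊆ Metric.closedBall x g.rOut := by
  intro y hy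
  have hxy : x - y ∈ tsupport (g.normed volume) :=
    tsupport_comp_subset_preimage _ (continuous_const.sub continuous_id) hy
  rwa [g.tsupport_normed_eq, mem_closedBall_zero_iff, ← dist_eq_norm, dist_comm] at hxy

/-- Classical strict supersolutions of the heat equation on the plane; the barriers with which weak
subsolutions are compared. -/
structure IsStrictHeatSupersolution (Φ : ℝ → ℝ → ℝ) : Prop where
  continuous : Continuous (Function.uncurry Φ)
  differentiable_time : ∀ x, Differentiable ℝ fun t => Φ t x
  contDiff_space : ∀ t, ContDiff ℝ 2 (Φ t)
  deriv_deriv_lt_deriv : ∀ t x, deriv (deriv (Φ t)) x < deriv (fun t => Φ t x) t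

lemma IsHeatSubsolutionOn.not_isMaxOn_mollify_sub {u Φ : ℝ → ℝ → ℝ} {O : Set (ℝ × ℝ)}
    (h : IsHeatSubsolutionOn u O) (hu : Continuous (Function.uncurry u))
    (hΦ : IsStrictHeatSupersolution Φ) {g : ℝ → ℝ} (hg : ContDiff ℝ ∞ g)
    (hgc : HasCompactSupport g) (hg0 : 0 ≤ g) {K : Set (ℝ × ℝ)} {t x : ℝ}
    (hO : ∀ᶠ s in 𝓝[<] t, Icc s t ×ˢ tsupport (fun y => g (x - y)) ⊆ O)
    (htime : ∀ᶠ s in 𝓝[<] t, (s, x) ∈ K) (hspace : ∀ᶠ y in 𝓝 x, (t, y) ∈ K) :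
    ¬ IsMaxOn (fun p => mollify g u p.1 p.2 - Φ p.1 p.2) K (t, x) := by
  intro hmax
  have hle_time : deriv (fun s => Φ s x) t ≤ mollify (deriv (deriv g)) u t x :=
    h.deriv_le_mollify_of_eventually_le_left hu hg hgc hg0 (hΦ.differentiable_time x t).hasDerivAt
      hO (htime.mono fun _ hs => hmax hs)
  have hle_space : mollify (deriv (deriv g)) u t x ≤ deriv (deriv (Φ t)) x :=
    mollify_le_deriv_deriv_of_isLocalMax hu (contDiff_infty.1 hg 2) hgc (hΦ.contDiff_space t)
      (hspace.mono fun _ hy => hmax hy)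
  exact (hle_time.trans hle_space).not_gt (hΦ.deriv_deriv_lt_deriv t x)

theorem IsHeatSubsolutionOn.le_of_le_parabolicBoundary {u Φ : ℝ → ℝ → ℝ} {T a b : ℝ}
    (h : IsHeatSubsolutionOn u (Icc 0 T ×ˢ Ioo a b ∩ {q | Φ q.1 q.2 < u q.1 q.2}))
    (hu : Continuous (Function.uncurry u)) (hΦ : IsStrictHeatSupersolution Φ)
    (hinit : ∀ x ∈ Icc a b, u 0 x ≤ Φ 0 x) (hleft : ∀ t ∈ Icc 0 T, u t a ≤ Φ t a)
    (hright : ∀ t ∈ Icc 0 T, u t b ≤ Φ t b) {t x : ℝ} (ht : t ∈ Icc 0 T) (hx : x ∈ Icc a b) :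
    u t x ≤ Φ t x := by
  by_contra! hlt
  obtain ⟨g, ⟨t₁, x₁⟩, ⟨ht₁, hx₁⟩, hmax, hpos⟩ := exists_bump_isMaxOn_mollify_sub hu hΦ.continuous
    (isCompact_Icc.prod isCompact_Icc) (mk_mem_prod ht hx) hlt
  simp only at ht₁ hx₁
  have hpos_of_dist : ∀ s y, |s - t₁| ≤ g.rOut → |y - x₁| ≤ g.rOut → Φ s y < u s y :=
    fun s y hs hy => hpos (s, y) (max_le hs hy)
  have hr := g.rOut_pos
  have ht₁0 : 0 < t₁ := by
    refine ht₁.1.lt_of_ne fun h0 => (hinit x₁ hx₁).not_gt ?_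
    exact h0 ▸ hpos_of_dist t₁ x₁ (by simpa using hr.le) (by simpa using hr.le)
  have hax₁ : a < x₁ - g.rOut := by
    by_contra! hle
    exact (hleft t₁ ht₁).not_gt (hpos_of_dist t₁ a (by simpa using hr.le)
      (abs_le.2 ⟨by linarith, by linarith [hx₁.1]⟩))
  have hx₁b : x₁ + g.rOut < b := by
    by_contra! hle
    exact (hright t₁ ht₁).not_gt (hpos_of_dist t₁ b (by simpa using hr.le)
      (abs_le.2 ⟨by linarith [hx₁.2], by linarith⟩))
  refine h.not_isMaxOn_mollify_sub hu hΦ g.contDiff_normed g.hasCompactSupport_normed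
    g.nonneg_normed ?_ ?_ ?_ hmax
  · filter_upwards [Ioo_mem_nhdsLT (max_lt ht₁0 (sub_lt_self t₁ hr))] with s hs ⟨τ, y⟩ ⟨hτ, hy⟩
    obtain ⟨h0s, hrs⟩ := max_lt_iff.1 hs.1
    have hyx₁ : |y - x₁| ≤ g.rOut := tsupport_normed_comp_const_sub_subset g x₁ hy
    have hy' := abs_le.1 hyx₁
    exact ⟨⟨⟨h0s.le.trans hτ.1, hτ.2.trans ht₁.2⟩, by linarith [hy'.1], by linarith [hy'.2]⟩,
      hpos_of_dist τ y (abs_le.2 ⟨by linarith [hτ.1], by linarith [hτ.2]⟩) hyx₁⟩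
  · filter_upwards [Ioo_mem_nhdsLT ht₁0] with s hs using ⟨⟨hs.1.le, hs.2.le.trans ht₁.2⟩, hx₁⟩
  · filter_upwards [Icc_mem_nhds (by linarith : a < x₁) (by linarith : x₁ < b)] with y hy
      using ⟨ht₁, hy⟩

/-! ### Weighted norms and barriers -/

section CrNorm

variable {r T : ℝ} {u w : ℝ → ℝ → ℝ}

lemma CrBdd.sub (hu : CrBdd r T u) (hw : CrBdd r T w) : CrBdd r T fun t x => u t x - w t x := by
  obtain ⟨B, hB⟩ := hu
  obtain ⟨B', hB'⟩ := hw
  refine ⟨B + B', forall_mem_image.2 fun q hq => ?_⟩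
  calc exp (-r * q.2) * |u q.1 q.2 - w q.1 q.2|
      ≤ exp (-r * q.2) * (|u q.1 q.2| + |w q.1 q.2|) := by gcongr; exact abs_sub _ _
    _ = exp (-r * q.2) * |u q.1 q.2| + exp (-r * q.2) * |w q.1 q.2| := mul_add _ _ _
    _ ≤ B + B' := add_le_add (hB (mem_image_of_mem _ hq)) (hB' (mem_image_of_mem _ hq))

lemma CrNorm_nonneg (r T : ℝ) (u : ℝ → ℝ → ℝ) : 0 ≤ CrNorm r T u :=
  Real.sSup_nonneg (forall_mem_image.2 fun _ _ => by positivity)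

lemma CrBdd.abs_le (hu : CrBdd r T u) {t x : ℝ} (ht : t ∈ Icc 0 T) (hx : 0 ≤ x) :
    |u t x| ≤ CrNorm r T u * exp (r * x) := by
  have hle : exp (-r * x) * |u t x| ≤ CrNorm r T u :=
    le_csSup hu (mem_image_of_mem _ (mk_mem_prod ht hx))
  rwa [neg_mul, exp_neg, inv_mul_le_iff₀ (exp_pos _), mul_comm] at hle

end CrNorm

/-- The barrier `M e^{rx + r²t} + ε e^{Rx + (R²+1)t}`, where `R = r + 1`. The first summand solves
the heat equation; the second one makes the sum a strict supersolution that outgrows `e^{rx}`. -/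
noncomputable def barrier (r M ε t x : ℝ) : ℝ :=
  M * exp (r * x + r ^ 2 * t) + ε * exp ((r + 1) * x + ((r + 1) ^ 2 + 1) * t)

lemma hasDerivAt_mul_exp_affine (a b c x : ℝ) :
    HasDerivAt (fun x => c * exp (a * x + b)) (c * a * exp (a * x + b)) x := by
  have haffine : HasDerivAt (fun x => a * x + b) a x := by
    simpa using ((hasDerivAt_id x).const_mul a).add_const b
  convert! haffine.exp.const_mul c using 1
  ring

lemma hasDerivAt_barrier_space (r M ε t x : ℝ) :
    HasDerivAt (barrier r M ε t) (barrier r (M * r) (ε * (r + 1)) t x) x :=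
  (hasDerivAt_mul_exp_affine r (r ^ 2 * t) M x).add
    (hasDerivAt_mul_exp_affine (r + 1) (((r + 1) ^ 2 + 1) * t) ε x)

lemma hasDerivAt_barrier_time (r M ε t x : ℝ) :
    HasDerivAt (fun t => barrier r M ε t x)
      (barrier r (M * r ^ 2) (ε * ((r + 1) ^ 2 + 1)) t x) t := by
  simpa only [barrier, add_comm (r * x), add_comm ((r + 1) * x)] using!
    (hasDerivAt_mul_exp_affine (r ^ 2) (r * x) M t).add
      (hasDerivAt_mul_exp_affine ((r + 1) ^ 2 + 1) ((r + 1) * x) ε t)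

lemma isStrictHeatSupersolution_barrier (r M : ℝ) {ε : ℝ} (hε : 0 < ε) :
    IsStrictHeatSupersolution (barrier r M ε) where
  continuous := by unfold barrier Function.uncurry; fun_prop
  differentiable_time x t := (hasDerivAt_barrier_time r M ε t x).differentiableAt
  contDiff_space t := by unfold barrier; fun_prop
  deriv_deriv_lt_deriv t x := by
    have hspace : deriv (deriv (barrier r M ε t)) x =
        barrier r (M * r * r) (ε * (r + 1) * (r + 1)) t x := by
      rw [funext fun y => (hasDerivAt_barrier_space r M ε t y).deriv]
      exact (hasDerivAt_barrier_space ..).deriv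
    have hpos : 0 < ε * exp ((r + 1) * x + ((r + 1) ^ 2 + 1) * t) := by positivity
    rw [hspace, (hasDerivAt_barrier_time r M ε t x).deriv]
    simp only [barrier]
    linarith

lemma mul_exp_lt_barrier {r M ε t : ℝ} (hM : 0 ≤ M) (hε : 0 < ε) (ht : 0 ≤ t) (x : ℝ) :
    M * exp (r * x) < barrier r M ε t x := by
  refine lt_add_of_le_of_pos ?_ (by positivity)
  gcongr
  exact le_add_of_nonneg_right (by positivity)

lemma CrBdd.eventually_le_barrier {r T M ε : ℝ} {u : ℝ → ℝ → ℝ} (hu : CrBdd r T u) (hM : 0 ≤ M)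
    (hε : 0 < ε) : ∀ᶠ x in atTop, ∀ t ∈ Icc 0 T, u t x ≤ barrier r M ε t x := by
  filter_upwards [eventually_ge_atTop 0,
    tendsto_exp_atTop.eventually_ge_atTop (CrNorm r T u / ε)] with x hx hexp t ht
  calc u t x ≤ CrNorm r T u * exp (r * x) := (le_abs_self _).trans (hu.abs_le ht hx)
    _ ≤ ε * exp x * exp (r * x) := by gcongr; rwa [div_le_iff₀' hε] at hexp
    _ = ε * exp ((r + 1) * x) := by rw [mul_assoc, ← exp_add]; ring_nf
    _ ≤ ε * exp ((r + 1) * x + ((r + 1) ^ 2 + 1) * t) := by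
        gcongr
        exact le_add_of_nonneg_right (mul_nonneg (by positivity) ht.1)
    _ ≤ barrier r M ε t x := le_add_of_nonneg_left (by positivity)

/-! ### Solutions of the obstacle problem -/

namespace IsObstacleSol

variable {r T : ℝ} {v z : ℝ → ℝ → ℝ} {η : Measure (ℝ × ℝ)}

lemma ae_mem (h : IsObstacleSol r T v z η) : ∀ᵐ q ∂η, q ∈ Ioi (0 : ℝ) ×ˢ Icc (0 : ℝ) T :=
  h.2.2.2.2.2.1

lemma aemeasurable_comp_swap (h : IsObstacleSol r T v z η) {f : ℝ → ℝ → ℝ}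
    (hf : ContinuousOn (Function.uncurry f) (Icc 0 T ×ˢ Ici 0)) :
    AEMeasurable (fun q : ℝ × ℝ => f q.2 q.1) η := by
  have hmaps : MapsTo Prod.swap (Ioi (0 : ℝ) ×ˢ Icc (0 : ℝ) T) (Icc 0 T ×ˢ Ici 0) :=
    fun q hq => ⟨hq.2, mem_Ici.2 (le_of_lt hq.1)⟩
  have hrestrict := (hf.comp continuous_swap.continuousOn hmaps).aemeasurable (μ := η)
    (measurableSet_Ioi.prod measurableSet_Icc)
  rwa [Measure.restrict_eq_self_of_ae_mem h.ae_mem] at hrestrict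

lemma ae_le_obstacle (h : IsObstacleSol r T v z η)
    (hv : AEMeasurable (fun q : ℝ × ℝ => v q.2 q.1) η) : ∀ᵐ q ∂η, z q.2 q.1 ≤ v q.2 q.1 := by
  have hz : AEMeasurable (fun q : ℝ × ℝ => z q.2 q.1) η := h.aemeasurable_comp_swap h.1
  obtain ⟨-, -, -, -, -, -, hcontact, -⟩ := h
  filter_upwards [(lintegral_eq_zero_iff' (hz.sub hv).ennreal_ofReal).1 hcontact] with q hq
  exact sub_nonpos.1 (ENNReal.ofReal_eq_zero.1 hq)

lemma congr {z' : ℝ → ℝ → ℝ} (h : IsObstacleSol r T v z η) (hT : 0 ≤ T)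
    (hzz' : ∀ t ∈ Icc 0 T, ∀ x ≥ 0, z' t x = z t x) : IsObstacleSol r T v z' η := by
  have hae := h.ae_mem
  obtain ⟨hz, hbdd, hleft, hinit, hvz, hη, hcontact, hweak⟩ := h
  have hEqOn : EqOn (Function.uncurry z') (Function.uncurry z) (Icc 0 T ×ˢ Ici 0) :=
    fun q hq => hzz' q.1 hq.1 q.2 hq.2
  have hpairing : ∀ ψ : ℝ → ℝ, ∀ t ∈ Icc 0 T,
      ∫ x in Ioi (0 : ℝ), z' t x * ψ x = ∫ x in Ioi (0 : ℝ), z t x * ψ x := fun ψ t ht =>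
    setIntegral_congr_fun measurableSet_Ioi fun x hx => by simp only [hzz' t ht x (le_of_lt hx)]
  refine ⟨hz.congr hEqOn, ?_, fun t ht => by rw [hzz' t ht 0 le_rfl, hleft t ht],
    fun x hx => by rw [hzz' 0 (left_mem_Icc.2 hT) x hx, hinit x hx],
    fun t ht x hx => by rw [hzz' t ht x hx]; exact hvz t ht x hx, hη, ?_, ?_⟩
  · rwa [CrBdd, image_congr fun q hq => by rw [hzz' q.1 hq.1 q.2 hq.2]]
  · rw [← hcontact]
    refine lintegral_congr_ae (hae.mono fun q hq => ?_)
    simp only [hzz' q.2 hq.2 q.1 (le_of_lt hq.1)]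
  · intro t ht φ hφ hφc hφ0
    rw [hpairing φ t ht, hweak t ht φ hφ hφc hφ0]
    congr 1
    exact setIntegral_congr_fun measurableSet_Ioc fun s hs =>
      (hpairing _ s ⟨hs.1.le, hs.2.trans ht.2⟩).symm

lemma exists_continuous_extension (h : IsObstacleSol r T v z η) (hT : 0 ≤ T) :
    ∃ Z : ℝ → ℝ → ℝ, Continuous (Function.uncurry Z) ∧
      (∀ t ∈ Icc 0 T, ∀ x ≥ 0, Z t x = z t x) ∧ IsObstacleSol r T v Z η := by
  obtain ⟨Z, hZ⟩ := ContinuousMap.exists_restrict_eq (isClosed_Icc.prod isClosed_Ici)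
    ⟨_, continuousOn_iff_continuous_domRestrict.1 h.1⟩
  have hZz : ∀ t ∈ Icc 0 T, ∀ x ≥ 0, Z (t, x) = z t x := fun t ht x hx =>
    DFunLike.congr_fun hZ ⟨(t, x), ht, hx⟩
  exact ⟨fun t x => Z (t, x), Z.continuous, hZz, h.congr hT hZz⟩

section TestFunction

variable {φ : ℝ → ℝ}

lemma heatDefect_eq_setIntegral (h : IsObstacleSol r T v z η) (hφ : ContDiff ℝ ∞ φ)
    (hφc : HasCompactSupport φ) (hφs : tsupport φ ⊆ Ioi 0) {t : ℝ} (ht : t ∈ Icc 0 T) :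
    heatDefect z φ t = ∫ q in Ioi (0 : ℝ) ×ˢ Ioc 0 t, φ q.1 ∂η := by
  have hIoi : ∀ ψ : ℝ → ℝ, tsupport ψ ⊆ Ioi 0 → ∀ s,
      ∫ x in Ioi (0 : ℝ), z s x * ψ x = ∫ x, z s x * ψ x := fun ψ hψ s =>
    setIntegral_eq_integral_of_forall_compl_eq_zero fun x hx => by
      rw [image_eq_zero_of_notMem_tsupport fun hxψ => hx (hψ hxψ), mul_zero]
  have hφs'' : tsupport (deriv (deriv φ)) ⊆ Ioi 0 :=
    tsupport_deriv_subset.trans (tsupport_deriv_subset.trans hφs)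
  obtain ⟨-, -, -, -, -, -, -, hweak⟩ := h
  have hφ0 : φ 0 = 0 := image_eq_zero_of_notMem_tsupport fun h0 =>
    lt_irrefl (0 : ℝ) (mem_Ioi.1 (hφs h0))
  have hweak_t := hweak t ht φ hφ hφc hφ0
  simp only [hIoi φ hφs, hIoi _ hφs''] at hweak_t
  rw [heatDefect, hweak_t, intervalIntegral.integral_of_le ht.1, add_sub_cancel_left]

lemma monotoneOn_heatDefect (h : IsObstacleSol r T v z η) (hz : Continuous (Function.uncurry z))
    (hφ : ContDiff ℝ ∞ φ) (hφc : HasCompactSupport φ) (hφs : tsupport φ ⊆ Ioi 0) (hφ0 : 0 ≤ φ) :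
    MonotoneOn (heatDefect z φ) (Icc 0 T) := by
  have hEqOn : EqOn (heatDefect z φ) (fun t => ∫ q in Ioi (0 : ℝ) ×ˢ Ioc 0 t, φ q.1 ∂η) (Icc 0 T) :=
    fun t ht => h.heatDefect_eq_setIntegral hφ hφc hφs ht
  refine (monotoneOn_setIntegral_of_continuousOn (fun q => hφ0 q.1)
    (fun s t hst => prod_mono_right (Ioc_subset_Ioc_right hst)) ?_).congr hEqOn.symm
  exact (continuous_heatDefect hz hφ hφc).continuousOn.congr hEqOn.symm

lemma heatDefect_eq_of_lt_on_tsupport (h : IsObstacleSol r T v z η)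
    (hv : AEMeasurable (fun q : ℝ × ℝ => v q.2 q.1) η) (hφ : ContDiff ℝ ∞ φ)
    (hφc : HasCompactSupport φ) (hφs : tsupport φ ⊆ Ioi 0) {s t : ℝ} (hs : s ∈ Icc 0 T)
    (ht : t ∈ Icc 0 T) (hst : s ≤ t) (hlt : ∀ τ ∈ Icc s t, ∀ x ∈ tsupport φ, v τ x < z τ x) :
    heatDefect z φ t = heatDefect z φ s := by
  rw [h.heatDefect_eq_setIntegral hφ hφc hφs ht, h.heatDefect_eq_setIntegral hφ hφc hφs hs]
  refine setIntegral_eq_of_subset_of_ae_sdiff_eq_zero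
    (measurableSet_Ioi.prod measurableSet_Ioc).nullMeasurableSet
    (prod_mono_right (Ioc_subset_Ioc_right hst)) ?_
  filter_upwards [h.ae_le_obstacle hv] with q hcontact ⟨⟨hq1, h0q, hqt⟩, hqs⟩
  have hsq : s ≤ q.2 := le_of_not_gt fun hlt_s => hqs ⟨hq1, h0q, hlt_s.le⟩
  exact image_eq_zero_of_notMem_tsupport fun hφq => (hlt q.2 ⟨hsq, hqt⟩ q.1 hφq).not_ge hcontact

end TestFunction

variable {v₁ v₂ z₁ z₂ : ℝ → ℝ → ℝ} {η₁ η₂ : Measure (ℝ × ℝ)}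

lemma isHeatSubsolutionOn_sub (h₁ : IsObstacleSol r T v₁ z₁ η₁) (h₂ : IsObstacleSol r T v₂ z₂ η₂)
    (hv₁ : AEMeasurable (fun q : ℝ × ℝ => v₁ q.2 q.1) η₁)
    (hz₁ : Continuous (Function.uncurry z₁)) (hz₂ : Continuous (Function.uncurry z₂)) :
    IsHeatSubsolutionOn (fun t x => z₁ t x - z₂ t x)
      (Icc 0 T ×ˢ Ioi 0 ∩ {q | v₁ q.1 q.2 < z₁ q.1 q.2}) := by
  intro φ hφ hφc hφ0 s t hst hsub
  rw [heatDefect_sub hz₁ hz₂ hφ hφc, heatDefect_sub hz₁ hz₂ hφ hφc]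
  obtain hempty | ⟨x₀, hx₀⟩ := (tsupport φ).eq_empty_or_nonempty
  · simp [heatDefect, tsupport_eq_empty_iff.1 hempty]
  have hmem : ∀ τ ∈ Icc s t, ∀ x ∈ tsupport φ, (τ ∈ Icc 0 T ∧ 0 < x) ∧ v₁ τ x < z₁ τ x :=
    fun τ hτ x hx => hsub (mk_mem_prod hτ hx)
  have hs : s ∈ Icc 0 T := (hmem s (left_mem_Icc.2 hst) x₀ hx₀).1.1
  have ht : t ∈ Icc 0 T := (hmem t (right_mem_Icc.2 hst) x₀ hx₀).1.1
  have hφs : tsupport φ ⊆ Ioi 0 := fun x hx => (hmem s (left_mem_Icc.2 hst) x hx).1.2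
  have heq : heatDefect z₁ φ t = heatDefect z₁ φ s :=
    h₁.heatDefect_eq_of_lt_on_tsupport hv₁ hφ hφc hφs hs ht hst fun τ hτ x hx => (hmem τ hτ x hx).2
  have hle : heatDefect z₂ φ s ≤ heatDefect z₂ φ t :=
    h₂.monotoneOn_heatDefect hz₂ hφ hφc hφs hφ0 hs ht hst
  linarith

lemma sub_le_barrier_of_continuous (h₁ : IsObstacleSol r T v₁ z₁ η₁)
    (h₂ : IsObstacleSol r T v₂ z₂ η₂) (hv₁ : AEMeasurable (fun q : ℝ × ℝ => v₁ q.2 q.1) η₁)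
    (hz₁ : Continuous (Function.uncurry z₁)) (hz₂ : Continuous (Function.uncurry z₂))
    {M ε : ℝ} (hM : 0 ≤ M) (hε : 0 < ε)
    (hle : ∀ t ∈ Icc 0 T, ∀ x ≥ 0, v₁ t x - v₂ t x ≤ M * exp (r * x))
    {t x : ℝ} (ht : t ∈ Icc 0 T) (hx : 0 ≤ x) : z₁ t x - z₂ t x ≤ barrier r M ε t x := by
  have hsub := h₁.isHeatSubsolutionOn_sub h₂ hv₁ hz₁ hz₂
  obtain ⟨-, hbdd₁, hleft₁, hinit₁, -⟩ := h₁
  obtain ⟨-, hbdd₂, hleft₂, hinit₂, hvz₂, -⟩ := h₂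
  obtain ⟨b, hfar, hxb⟩ := (((hbdd₁.sub hbdd₂).eventually_le_barrier hM hε).and
    (eventually_ge_atTop x)).exists
  have hbarrier : ∀ t ∈ Icc 0 T, ∀ x, M * exp (r * x) < barrier r M ε t x :=
    fun t ht => mul_exp_lt_barrier hM hε ht.1
  have hbarrier0 : ∀ t ∈ Icc 0 T, ∀ x, 0 ≤ barrier r M ε t x :=
    fun t ht x => le_trans (by positivity) (hbarrier t ht x).le
  refine (hsub.mono ?_).le_of_le_parabolicBoundary (a := 0) (b := b) (hz₁.sub hz₂)
    (isStrictHeatSupersolution_barrier r M hε) (fun y hy => ?_) (fun s hs => ?_) hfar ht ⟨hx, hxb⟩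
  · rintro ⟨s, y⟩ ⟨⟨hs, hy⟩, hlt⟩
    refine ⟨⟨hs, hy.1⟩, ?_⟩
    simp only [mem_ofPred_eq] at hlt ⊢
    linarith [hbarrier s hs y, hle s hs y hy.1.le, hvz₂ s hs y hy.1.le]
  · simpa only [hinit₁ y hy.1, hinit₂ y hy.1, sub_self] using
      hbarrier0 0 (left_mem_Icc.2 (ht.1.trans ht.2)) y
  · simpa only [hleft₁ s hs, hleft₂ s hs, sub_self] using hbarrier0 s hs 0

lemma sub_le_barrier (h₁ : IsObstacleSol r T v₁ z₁ η₁) (h₂ : IsObstacleSol r T v₂ z₂ η₂)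
    (hv₁ : AEMeasurable (fun q : ℝ × ℝ => v₁ q.2 q.1) η₁) {M ε : ℝ} (hM : 0 ≤ M) (hε : 0 < ε)
    (hle : ∀ t ∈ Icc 0 T, ∀ x ≥ 0, v₁ t x - v₂ t x ≤ M * exp (r * x))
    {t x : ℝ} (ht : t ∈ Icc 0 T) (hx : 0 ≤ x) : z₁ t x - z₂ t x ≤ barrier r M ε t x := by
  obtain ⟨Z₁, hZ₁, hZz₁, hsol₁⟩ := h₁.exists_continuous_extension (ht.1.trans ht.2)
  obtain ⟨Z₂, hZ₂, hZz₂, hsol₂⟩ := h₂.exists_continuous_extension (ht.1.trans ht.2)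
  rw [← hZz₁ t ht x hx, ← hZz₂ t ht x hx]
  exact hsol₁.sub_le_barrier_of_continuous hsol₂ hv₁ hZ₁ hZ₂ hM hε hle ht hx

lemma sub_le_mul_exp (h₁ : IsObstacleSol r T v₁ z₁ η₁) (h₂ : IsObstacleSol r T v₂ z₂ η₂)
    (hv₁ : AEMeasurable (fun q : ℝ × ℝ => v₁ q.2 q.1) η₁) {M : ℝ} (hM : 0 ≤ M)
    (hle : ∀ t ∈ Icc 0 T, ∀ x ≥ 0, v₁ t x - v₂ t x ≤ M * exp (r * x))
    {t x : ℝ} (ht : t ∈ Icc 0 T) (hx : 0 ≤ x) :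
    z₁ t x - z₂ t x ≤ M * exp (r * x + r ^ 2 * t) := by
  set E := exp ((r + 1) * x + ((r + 1) ^ 2 + 1) * t) with hE
  have hE0 : 0 < E := exp_pos _
  refine le_of_forall_pos_le_add fun ε hε => ?_
  have hbarrier := h₁.sub_le_barrier h₂ hv₁ hM (div_pos hε hE0) hle ht hx
  rwa [barrier, ← hE, div_mul_cancel₀ _ hE0.ne'] at hbarrier

end IsObstacleSol

theorem stmt_9_general {r T : ℝ} {v₁ v₂ z₁ z₂ : ℝ → ℝ → ℝ} {η₁ η₂ : Measure (ℝ × ℝ)}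
    (hv₁ : AEMeasurable (fun q : ℝ × ℝ => v₁ q.2 q.1) η₁)
    (hv₂ : AEMeasurable (fun q : ℝ × ℝ => v₂ q.2 q.1) η₂)
    (hbdd : CrBdd r T fun t x => v₁ t x - v₂ t x)
    (h₁ : IsObstacleSol r T v₁ z₁ η₁) (h₂ : IsObstacleSol r T v₂ z₂ η₂)
    {t x : ℝ} (ht : t ∈ Icc 0 T) (hx : 0 ≤ x) :
    exp (-r * x) * |z₁ t x - z₂ t x| ≤
      exp (r ^ 2 * T) * CrNorm r T fun t x => v₁ t x - v₂ t x := by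
  set M := CrNorm r T fun t x => v₁ t x - v₂ t x
  have hM : 0 ≤ M := CrNorm_nonneg ..
  have hle : |z₁ t x - z₂ t x| ≤ M * exp (r * x + r ^ 2 * t) := by
    refine abs_sub_le_iff.2 ⟨h₁.sub_le_mul_exp h₂ hv₁ hM (fun s hs y hy => ?_) ht hx,
      h₂.sub_le_mul_exp h₁ hv₂ hM (fun s hs y hy => ?_) ht hx⟩
    · exact (abs_sub_le_iff.1 (hbdd.abs_le hs hy)).1
    · exact (abs_sub_le_iff.1 (hbdd.abs_le hs hy)).2
  calc exp (-r * x) * |z₁ t x - z₂ t x| ≤ exp (-r * x) * (M * exp (r * x + r ^ 2 * t)) := by gcongr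
    _ = exp (r ^ 2 * t) * M := by rw [mul_left_comm, ← exp_add, mul_comm]; ring_nf
    _ ≤ exp (r ^ 2 * T) * M := by gcongr; exact ht.2

/-- Theorem 2.6 of Hambly–Kalsi, comparison estimate: the solution of the
obstacle problem depends Lipschitz-continuously on the obstacle in `C_r^T`. -/
theorem stmt_9 (r T : ℝ) (hT : 0 < T) :
    ∃ C > (0:ℝ), ∀ (v₁ v₂ z₁ z₂ : ℝ → ℝ → ℝ) (η₁ η₂ : Measure (ℝ × ℝ)),
      ContinuousOn (Function.uncurry v₁) (Icc 0 T ×ˢ Ici 0) →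
      ContinuousOn (Function.uncurry v₂) (Icc 0 T ×ˢ Ici 0) →
      CrBdd r T v₁ → CrBdd r T v₂ →
      (∀ t ∈ Icc (0:ℝ) T, v₁ t 0 = 0) → (∀ t ∈ Icc (0:ℝ) T, v₂ t 0 = 0) →
      (∀ x ≥ (0:ℝ), v₁ 0 x ≤ 0) → (∀ x ≥ (0:ℝ), v₂ 0 x ≤ 0) →
      IsObstacleSol r T v₁ z₁ η₁ → IsObstacleSol r T v₂ z₂ η₂ →
      ∀ t ∈ Icc (0:ℝ) T, ∀ x ≥ (0:ℝ),
        Real.exp (-r * x) * |z₁ t x - z₂ t x|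
          ≤ C * CrNorm r T (fun t' x' => v₁ t' x' - v₂ t' x') := by
  exact ⟨exp (r ^ 2 * T), exp_pos _, fun _ _ _ _ _ _ hv₁ hv₂ hb₁ hb₂ _ _ _ _ h₁ h₂ _ ht _ hx =>
    stmt_9_general (h₁.aemeasurable_comp_swap hv₁) (h₂.aemeasurable_comp_swap hv₂)
      (hb₁.sub hb₂) h₁ h₂ ht hx⟩
end
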